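/- Assume P_{ij} > 0 for all i,j and Q_{ii} > 0 for all i. Let (e, f, u) be the fluid model solution with initial condition (e(0), f(0)) ∈ 𝒯. Then the trajectory converges to the equilibrium set: for every ε > 0 there exists T > 0 such that inf_{x ∈ ℰ} |(e(t), f(t)) − x| < ε for all t ≥ T, where |·| denotes the entrywise maximum norm. -/

import Mathlib

open Finset Filter Topology MeasureTheory intervalIntegral

abbrev Mat (r : ℕ) := Fin r → Fin r → ℝ

structure NetParams (r : ℕ) where
  lam : Fin r → ℝ
  mu : Mat r
  P : Mat r
  lam_pos : ∀ i, 0 < lam i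
  mu_pos : ∀ i j, 0 < mu i j
  P_nonneg : ∀ i j, 0 ≤ P i j
  P_rowsum : ∀ i, ∑ j, P i j = 1

def IsRouting {r : ℕ} (q : Mat r) : Prop :=
  (∀ i j, 0 ≤ q i j) ∧ ∀ i, ∑ j, q i j = 1

def MemT {r : ℕ} (e f : Mat r) : Prop :=
  (∀ i j, e i j ∈ Set.Icc (0:ℝ) 1) ∧ (∀ i j, f i j ∈ Set.Icc (0:ℝ) 1) ∧
    (∑ i, ∑ j, (e i j + f i j)) = 1

open scoped Classical in
/-- The Lebesgue–Stieltjes measure associated with a non-decreasing `g : ℝ → ℝ`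
(junk value `0` if `g` is not monotone). -/
noncomputable def lsMeasure (g : ℝ → ℝ) : Measure ℝ :=
  if h : Monotone g then h.stieltjesFunction.measure else 0

/-- A fluid model solution `(e, f, u)` for the ridesharing network with static
routing matrix `Q`.  All functions are defined on `ℝ`, but only their values
on `[0, ∞)` are relevant; `u` is extended by `0` on `(-∞, 0]`. -/
structure IsFluidSol {r : ℕ} (np : NetParams r) (Q : Mat r) (e f : ℝ → Mat r)
    (u : ℝ → Fin r → ℝ) : Prop where
  cont_e : ∀ i j, ContinuousOn (fun t => e t i j) (Set.Ici 0)
  cont_f : ∀ i j, ContinuousOn (fun t => f t i j) (Set.Ici 0)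
  mem_T : ∀ t, 0 ≤ t → MemT (e t) (f t)
  u_nonneg : ∀ t i, 0 ≤ u t i
  u_mono : ∀ i, Monotone fun t => u t i
  u_zero : ∀ i, ∀ t ≤ (0:ℝ), u t i = 0
  eq_f : ∀ i j, ∀ t, 0 ≤ t →
    f t i j = f 0 i j + np.lam i * np.P i j * (t - u t i)
      - np.mu i j * ∫ s in (0:ℝ)..t, f s i j
  eq_e_off : ∀ i j, i ≠ j → ∀ t, 0 ≤ t →
    e t i j = e 0 i j - np.mu i j * (∫ s in (0:ℝ)..t, e s i j)
      + Q i j * ∑ k, np.mu k i * ∫ s in (0:ℝ)..t, f s k i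
  eq_e_diag : ∀ i, ∀ t, 0 ≤ t →
    e t i i = e 0 i i - np.lam i * (t - u t i)
      + (∑ j ∈ Finset.univ.filter (fun j => j ≠ i), np.mu j i * ∫ s in (0:ℝ)..t, e s j i)
      + Q i i * ∑ j, np.mu j i * ∫ s in (0:ℝ)..t, f s j i
  compl : ∀ i, ∫⁻ s in Set.Ici (0:ℝ),
      ENNReal.ofReal (e s i i) ∂(lsMeasure fun t => u t i) = 0

open scoped Classical in
/-- The equilibrium set ℰ associated to the routing matrix `Q`. -/
noncomputable def eqSet {r : ℕ} (np : NetParams r) (Q : Mat r) : Set (Mat r × Mat r) :=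
  {p | MemT p.1 p.2 ∧ ∃ a : Fin r → ℝ, (∀ i, 0 ≤ a i ∧ a i ≤ 1) ∧
    (∀ i j, np.lam i * np.P i j * a i = np.mu i j * p.2 i j) ∧
    (∀ i j, i ≠ j → np.mu i j * p.1 i j = Q i j * ∑ k, np.mu k i * p.2 k i) ∧
    (∀ i, np.lam i * a i =
      (∑ k ∈ Finset.univ.filter (fun k => k ≠ i), np.mu k i * p.1 k i)
        + Q i i * ∑ k, np.mu k i * p.2 k i) ∧
    (∀ i, (1 - a i) * p.1 i i = 0)}

/-!
Let `π` be a positive solution of the traffic equations `π = π P Q`, scaled so that `π ≤ λ` with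
equality at a bottleneck station `b`. For `c ≤ 1`, the total amount by which the cars in transit
fall short of `c` times the stationary profile of `π` is nonincreasing: a shortage travels through
the network like cars do, and no new one arises at a nonempty station, which serves at rate
`λ_i ≥ c π_i`. In particular, once the transits have reached the level `c`, they stay above it.

Let `c` be the supremum of the levels that are reached. Then the arrival rate at `b` converges to
`c π_b`. If `c < 1`, a recurring excess over this value would, by uniform continuity, last for a
fixed time, and since `P > 0` and `Q_ii > 0` it would spread to all transits and lift them above the
level `c`. If `c = 1`, then `e_bb` minus the total shortfall is nondecreasing and bounded, and the
excess, which bounds its rate of increase from below, tends to zero by Barbalat's lemma. The limit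
at `b` determines the limits of all transits, one relaxation equation at a time. A station with
`c π_i < λ_i` runs empty in the limit, so every cluster point is an equilibrium, and compactness of
`𝒯` gives the convergence.
-/

/-! ### Scalar integral inequalities -/

section Relaxation

variable {g H φ : ℝ → ℝ} {μ A B a L : ℝ}

lemma eventually_slope_integral_lt {k : ℝ → ℝ} {x ε : ℝ} (hk : Continuous k) (hx : k x = 0)
    (hε : 0 < ε) : ∀ᶠ z in 𝓝[>] x, ∫ y in x..z, k y < ε * (z - x) := by
  have hderiv : HasDerivWithinAt (fun z => ∫ y in x..z, k y) 0 (Set.Ioi x) x := by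
    simpa only [hx] using (hk.integral_hasStrictDerivAt x x).hasDerivAt.hasDerivWithinAt
  filter_upwards [hderiv.limsup_slope_le' Set.self_notMem_Ioi hε, self_mem_nhdsWithin] with z hz hxz
  rwa [slope_def_field, integral_same, sub_zero, div_lt_iff₀ (sub_pos.2 hxz)] at hz

lemma integral_negPart_eq_sub (hg : Continuous g) (s t : ℝ) :
    ∫ x in s..t, (g x)⁻ = (∫ x in s..t, (g x)⁺) - ∫ x in s..t, g x := by
  have hcont : Continuous fun x => (g x)⁺ := hg.sup continuous_const
  rw [← integral_sub (hcont.intervalIntegrable _ _) (hg.intervalIntegrable _ _)]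
  refine integral_congr fun x _ => ?_
  linarith [posPart_sub_negPart (g x)]

lemma eventually_same_sign {x : ℝ} (hg : Continuous g) :
    ∀ᶠ z in 𝓝[>] x, (g x ≤ 0 ∧ g z ≤ 0) ∨ (0 ≤ g x ∧ 0 ≤ g z) := by
  have hgz : Tendsto g (𝓝[>] x) (𝓝 (g x)) := hg.continuousWithinAt
  rcases lt_trichotomy (g x) 0 with hneg | hzero | hpos
  · filter_upwards [hgz.eventually_lt_const hneg] with z hz using .inl ⟨hneg.le, hz.le⟩
  · filter_upwards with z
    exact (le_total (g z) 0).imp (⟨hzero.le, ·⟩) (⟨hzero.ge, ·⟩)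
  · filter_upwards [hgz.eventually_const_lt hpos] with z hz using .inr ⟨hpos.le, hz.le⟩

/- On a short interval `[x, z]` either `g ≤ 0` at both ends and the error is the integral of `g⁺`,
where `g⁺ x = 0`, or `g ≥ 0` at both ends and the error is the integral of `g⁻`, where
`g⁻ x = 0`. -/
lemma eventually_posPart_sub_le {x ε : ℝ} (hg : Continuous g) (hε : 0 < ε)
    (hH : ∀ᶠ z in 𝓝[>] x, H x ≤ H z)
    (h : ∀ᶠ z in 𝓝[>] x, g z - g x ≤ H z - H x - μ * ∫ y in x..z, g y) :
    ∀ᶠ z in 𝓝[>] x,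
      (g z)⁺ - (g x)⁺ < H z - H x - (μ * ∫ y in x..z, (g y)⁺) + ε * (z - x) := by
  have hsmall_pos : ∀ᶠ z in 𝓝[>] x, g x ≤ 0 → μ * ∫ y in x..z, (g y)⁺ < ε * (z - x) := by
    refine eventually_imp_distrib_left.2 fun hgx => ?_
    simpa only [intervalIntegral.integral_const_mul] using eventually_slope_integral_lt (x := x)
      (k := fun y => μ * (g y)⁺)
      (continuous_const.mul (hg.sup continuous_const)) (by simp [hgx]) hε
  have hsmall_neg : ∀ᶠ z in 𝓝[>] x, 0 ≤ g x → μ * ∫ y in x..z, (g y)⁻ < ε * (z - x) := by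
    refine eventually_imp_distrib_left.2 fun hgx => ?_
    simpa only [intervalIntegral.integral_const_mul] using eventually_slope_integral_lt (x := x)
      (k := fun y => μ * (g y)⁻)
      (continuous_const.mul (hg.neg.sup continuous_const)) (by simp [hgx]) hε
  filter_upwards [hsmall_pos, hsmall_neg, eventually_same_sign hg, hH, h]
    with z hzpos hzneg hsign hHz hgz
  rcases hsign with ⟨hx, hz⟩ | ⟨hx, hz⟩
  · rw [posPart_of_nonpos hx, posPart_of_nonpos hz]
    linarith [hzpos hx]
  · rw [posPart_of_nonneg hx, posPart_of_nonneg hz]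
    have hneg := hzneg hx
    rw [integral_negPart_eq_sub hg, mul_sub] at hneg
    linarith

lemma posPart_sub_le_of_sub_le (hg : Continuous g) (hH : Continuous H)
    (hHmono : MonotoneOn H (Set.Icc A B)) (hAB : A ≤ B)
    (h : ∀ s t, A ≤ s → s ≤ t → t ≤ B → g t - g s ≤ H t - H s - μ * ∫ x in s..t, g x) :
    (g B)⁺ - (g A)⁺ ≤ H B - H A - μ * ∫ x in A..B, (g x)⁺ := by
  have hgpos : Continuous fun x => (g x)⁺ := hg.sup continuous_const
  set F : ℝ → ℝ := fun t => (g t)⁺ - H t + μ * ∫ x in A..t, (g x)⁺ with hF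
  have hFcont : Continuous F :=
    (hgpos.sub hH).add
      (continuous_const.mul (continuous_primitive (fun _ _ => hgpos.intervalIntegrable _ _) A))
  have hslope : ∀ x ∈ Set.Ico A B, ∀ ε > 0, ∃ᶠ z in 𝓝[>] x, slope F x z < ε := by
    intro x hx ε hε
    have hright : ∀ᶠ z in 𝓝[>] x, x < z ∧ z < B := Ioo_mem_nhdsGT hx.2
    refine Eventually.frequently ?_
    filter_upwards [hright, eventually_posPart_sub_le (μ := μ) hg hε
      (hright.mono fun z hz => hHmono ⟨hx.1, hx.2.le⟩ ⟨hx.1.trans hz.1.le, hz.2.le⟩ hz.1.le)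
      (hright.mono fun z hz => h x z hx.1 hz.1.le hz.2.le)] with z hz hbound
    have hadd := integral_add_adjacent_intervals (hgpos.intervalIntegrable (μ := volume) A x)
      (hgpos.intervalIntegrable x z)
    rw [slope_def_field, div_lt_iff₀ (sub_pos.2 hz.1)]
    simp only [hF, ← hadd]
    linarith
  have hle := image_le_of_liminf_slope_right_le_deriv_boundary hFcont.continuousOn
    (B := fun _ => F A) le_rfl continuousOn_const (fun x _ => hasDerivWithinAt_const x _ _)
    hslope (Set.right_mem_Icc.2 hAB)
  simp only [hF, integral_same] at hle
  linarith

/-- The solution of `y' = a - μ y` with value `y₀` at time `A`. -/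
noncomputable def relaxation (a μ A y₀ t : ℝ) : ℝ :=
  a / μ + (y₀ - a / μ) * Real.exp (-μ * (t - A))

lemma continuous_relaxation (a μ A y₀ : ℝ) : Continuous (relaxation a μ A y₀) := by
  unfold relaxation
  fun_prop

lemma hasDerivAt_relaxation (hμ : μ ≠ 0) (a A y₀ t : ℝ) :
    HasDerivAt (relaxation a μ A y₀) (a - μ * relaxation a μ A y₀ t) t := by
  have hexp : HasDerivAt (fun t : ℝ => -μ * (t - A)) (-μ) t := by
    simpa using ((hasDerivAt_id t).sub_const A).const_mul (-μ)
  have hval : (y₀ - a / μ) * (Real.exp (-μ * (t - A)) * -μ) = a - μ * relaxation a μ A y₀ t := by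
    rw [relaxation]
    field_simp
    ring
  exact hval ▸ (hexp.exp.const_mul (y₀ - a / μ)).const_add (a / μ)

lemma relaxation_sub (hμ : μ ≠ 0) (a A y₀ s t : ℝ) :
    relaxation a μ A y₀ t - relaxation a μ A y₀ s
      = a * (t - s) - μ * ∫ x in s..t, relaxation a μ A y₀ x := by
  have hcont : Continuous fun x => μ * relaxation a μ A y₀ x :=
    continuous_const.mul (continuous_relaxation a μ A y₀)
  rw [← integral_eq_sub_of_hasDerivAt (fun x _ => hasDerivAt_relaxation hμ a A y₀ x)
      ((continuous_const.sub hcont).intervalIntegrable _ _),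
    integral_sub intervalIntegrable_const (hcont.intervalIntegrable _ _),
    intervalIntegral.integral_const, intervalIntegral.integral_const_mul, smul_eq_mul, mul_comm a]

lemma tendsto_relaxation (hμ : 0 < μ) (a A y₀ : ℝ) :
    Tendsto (relaxation a μ A y₀) atTop (𝓝 (a / μ)) := by
  have hexp : Tendsto (fun t => Real.exp (-μ * (t - A))) atTop (𝓝 0) :=
    Real.tendsto_exp_atBot.comp <|
      (tendsto_atTop_add_const_right _ (-A) tendsto_id).const_mul_atTop_of_neg (neg_lt_zero.2 hμ)
  unfold relaxation
  simpa only [mul_zero, add_zero] using (hexp.const_mul (y₀ - a / μ)).const_add (a / μ)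

lemma relaxation_le (hμ : 0 < μ) (hg : Continuous g) (hAB : A ≤ B)
    (h : ∀ s t, A ≤ s → s ≤ t → t ≤ B → a * (t - s) - μ * ∫ x in s..t, g x ≤ g t - g s) :
    relaxation a μ A (g A) B ≤ g B := by
  set y := relaxation a μ A (g A) with hy
  have hycont : Continuous y := continuous_relaxation a μ A (g A)
  have hyA : y A = g A := by simp [hy, relaxation]
  have hpos := posPart_sub_le_of_sub_le (g := fun t => y t - g t) (H := fun _ => 0) (μ := μ)
    (hycont.sub hg) continuous_const monotoneOn_const hAB fun s t hs hst ht => by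
      rw [integral_sub (hycont.intervalIntegrable _ _) (hg.intervalIntegrable _ _)]
      linarith [h s t hs hst ht, relaxation_sub hμ.ne' a A (g A) s t]
  have hint : 0 ≤ ∫ x in A..B, (y x - g x)⁺ := integral_nonneg hAB fun _ _ => posPart_nonneg _
  rw [hyA, sub_self, posPart_zero] at hpos
  linarith [le_posPart (y B - g B), mul_nonneg hμ.le hint]

lemma eventually_lt_of_relaxation {l : ℝ} (hμ : 0 < μ) (hg : Continuous g) (hφ : Continuous φ)
    (h : ∀ s t, 0 ≤ s → s ≤ t → g t - g s = (∫ x in s..t, φ x) - μ * ∫ x in s..t, g x)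
    (hL : Tendsto φ atTop (𝓝 L)) (hl : l < L / μ) : ∀ᶠ t in atTop, l < g t := by
  obtain ⟨m, hlm, hmL⟩ := exists_between hl
  obtain ⟨T₀, hT₀⟩ := eventually_atTop.1 (hL.eventually_const_lt ((lt_div_iff₀ hμ).1 hmL))
  set T := max T₀ 0
  have hlower : ∀ t, T ≤ t → relaxation (m * μ) μ T (g T) t ≤ g t := by
    refine fun t ht => relaxation_le hμ hg ht fun s t' hs hst _ => ?_
    have hφint : ∫ _ in s..t', m * μ ≤ ∫ x in s..t', φ x :=
      integral_mono_on hst intervalIntegrable_const (hφ.intervalIntegrable _ _) fun x hx =>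
        (hT₀ x ((le_max_left _ _).trans (hs.trans hx.1))).le
    rw [intervalIntegral.integral_const, smul_eq_mul] at hφint
    linarith [h s t' ((le_max_right _ _).trans hs) hst]
  have hlim := tendsto_relaxation hμ (m * μ) T (g T)
  rw [mul_div_cancel_right₀ m hμ.ne'] at hlim
  filter_upwards [hlim.eventually_const_lt hlm, eventually_ge_atTop T] with t ht hTt
    using ht.trans_le (hlower t hTt)

lemma tendsto_of_relaxation (hμ : 0 < μ) (hg : Continuous g) (hφ : Continuous φ)
    (h : ∀ s t, 0 ≤ s → s ≤ t → g t - g s = (∫ x in s..t, φ x) - μ * ∫ x in s..t, g x)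
    (hL : Tendsto φ atTop (𝓝 L)) : Tendsto g atTop (𝓝 (L / μ)) := by
  refine tendsto_order.2 ⟨fun l hl => eventually_lt_of_relaxation hμ hg hφ h hL hl, fun l hl => ?_⟩
  have hneg := eventually_lt_of_relaxation (g := fun t => -g t) (φ := fun t => -φ t) (L := -L)
    (l := -l) hμ hg.neg hφ.neg
    (fun s t hs hst => by
      rw [intervalIntegral.integral_neg, intervalIntegral.integral_neg]
      linarith [h s t hs hst])
    hL.neg (by rw [neg_div]; exact neg_lt_neg hl)
  exact hneg.mono fun t ht => neg_lt_neg_iff.1 ht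

/- If the input is at least `μ(a + η)b` and the initial level at least `a b`, a fraction
`1 - exp(-μ w)` of the excess input has been passed on to `g` after time `w`. -/
lemma relaxation_gain {η b w t : ℝ} (hμ : 0 < μ) (hg : Continuous g) (hb : 0 ≤ b) (hη : 0 ≤ η)
    (hgA : a * b ≤ g A) (hw : 0 ≤ w) (ht : A + w ≤ t)
    (h : ∀ x y, A ≤ x → x ≤ y → y ≤ t →
      μ * ((a + η) * b) * (y - x) - μ * ∫ z in x..y, g z ≤ g y - g x) :
    (a + η * (1 - Real.exp (-μ * w))) * b ≤ g t := by
  have hlower := relaxation_le hμ hg (by linarith) h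
  have hexp : Real.exp (-μ * (t - A)) ≤ Real.exp (-μ * w) :=
    Real.exp_le_exp.2 (by nlinarith)
  rw [relaxation, mul_div_cancel_left₀ _ hμ.ne'] at hlower
  nlinarith [mul_le_mul_of_nonneg_left hexp (mul_nonneg hη hb),
    mul_le_mul_of_nonneg_right hgA (Real.exp_pos (-μ * (t - A))).le]

end Relaxation

section LongTime

variable {g : ℝ → ℝ} {L M w : ℝ}

lemma tendsto_integral_window (hg : Continuous g) (hL : Tendsto g atTop (𝓝 L)) (hw : 0 < w) :
    Tendsto (fun t => ∫ x in t..t + w, g x) atTop (𝓝 (L * w)) := by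
  refine Metric.tendsto_atTop.2 fun ε hε => ?_
  obtain ⟨T, hT⟩ := Metric.tendsto_atTop.1 hL (ε / (2 * w)) (by positivity)
  refine ⟨T, fun t ht => ?_⟩
  have hbound := norm_integral_le_of_norm_le_const (a := t) (b := t + w)
    (f := fun x => g x - L) (C := ε / (2 * w)) fun x hx =>
      (hT x (ht.trans (by rw [Set.uIoc_of_le (by linarith)] at hx; exact hx.1.le))).le
  rw [integral_sub (hg.intervalIntegrable _ _) intervalIntegrable_const,
    intervalIntegral.integral_const, add_sub_cancel_left, smul_eq_mul, mul_comm w,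
    abs_of_pos hw] at hbound
  calc dist (∫ x in t..t + w, g x) (L * w) ≤ ε / (2 * w) * w := hbound
    _ = ε / 2 := by field_simp
    _ < ε := half_lt_self hε

/-- Barbalat's lemma. -/
lemma tendsto_zero_of_integral_le (hg : Continuous g) (hg0 : ∀ t, 0 ≤ t → 0 ≤ g t)
    (hunif : UniformContinuousOn g (Set.Ici 0)) (hM : ∀ t, 0 ≤ t → ∫ x in (0 : ℝ)..t, g x ≤ M) :
    Tendsto g atTop (𝓝 0) := by
  set F : ℝ → ℝ := fun t => ∫ x in (0 : ℝ)..max t 0, g x with hF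
  have hsub : ∀ s t, 0 ≤ s → 0 ≤ t → F t - F s = ∫ x in s..t, g x := fun s t hs ht => by
    simp only [hF, max_eq_left hs, max_eq_left ht]
    exact integral_interval_sub_left (hg.intervalIntegrable _ _) (hg.intervalIntegrable _ _)
  have hmono : Monotone F := fun s t hst =>
    integral_mono_interval le_rfl (le_max_right _ _) (max_le_max_right 0 hst)
      ((ae_restrict_mem measurableSet_Ioc).mono fun x hx => hg0 x hx.1.le)
      (hg.intervalIntegrable _ _)
  have hF_lim := tendsto_atTop_ciSup hmono
    ⟨M, by rintro _ ⟨t, rfl⟩; exact hM _ (le_max_right _ _)⟩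
  refine tendsto_order.2 ⟨fun l hl =>
    (eventually_ge_atTop 0).mono fun t ht => hl.trans_le (hg0 t ht), fun ε hε => ?_⟩
  obtain ⟨δ, hδ, hgδ⟩ := Metric.uniformContinuousOn_iff.1 hunif (ε / 2) (half_pos hε)
  have hincr : Tendsto (fun t => F (t + δ / 2) - F t) atTop (𝓝 0) := by
    simpa using (hF_lim.comp (tendsto_atTop_add_const_right _ (δ / 2) tendsto_id)).sub hF_lim
  filter_upwards [hincr.eventually_lt_const (by positivity : 0 < ε / 2 * (δ / 2)),
    eventually_ge_atTop 0] with t ht ht0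
  have hlower : ∫ x in t..t + δ / 2, (g t - ε / 2) ≤ ∫ x in t..t + δ / 2, g x := by
    refine integral_mono_on (by linarith) intervalIntegrable_const (hg.intervalIntegrable _ _)
      fun x hx => ?_
    have hdist := hgδ t ht0 x (ht0.trans hx.1) (by
      rw [dist_comm, Real.dist_eq, abs_of_nonneg (sub_nonneg.2 hx.1)]
      linarith [hx.2])
    linarith [(abs_lt.1 hdist).2]
  rw [intervalIntegral.integral_const, smul_eq_mul, add_sub_cancel_left,
    ← hsub t _ ht0 (by linarith)] at hlower
  nlinarith

end LongTime

/-! ### Invariant vectors of positive stochastic matrices -/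

section Stochastic

open Matrix

variable {n : Type*} [Fintype n] [DecidableEq n] {M : Matrix n n ℝ} {v : n → ℝ}

lemma exists_ne_zero_vecMul_eq_self [Nonempty n] (hM : M ∈ rowStochastic ℝ n) :
    ∃ v, v ≠ 0 ∧ v ᵥ* M = v := by
  have hdet : (M - 1).det = 0 := exists_mulVec_eq_zero_iff.1
    ⟨1, one_ne_zero, by rw [sub_mulVec, one_mulVec, one_vecMul_of_mem_rowStochastic hM, sub_self]⟩
  obtain ⟨v, hv, hvM⟩ := exists_vecMul_eq_zero_iff.2 hdet
  exact ⟨v, hv, by rwa [vecMul_sub, vecMul_one, sub_eq_zero] at hvM⟩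

lemma abs_vecMul_eq_self (hM : M ∈ rowStochastic ℝ n) (hv : v ᵥ* M = v) : |v| ᵥ* M = |v| := by
  have hle : ∀ i, |v| i ≤ (|v| ᵥ* M) i := fun i => calc
    |v| i = |∑ j, v j * M j i| := congrArg abs (congrFun hv i).symm
    _ ≤ ∑ j, |v j * M j i| := Finset.abs_sum_le_sum_abs _ _
    _ = (|v| ᵥ* M) i := by
      simp only [vecMul, dotProduct, abs_mul, Pi.abs_apply,
        abs_of_nonneg (nonneg_of_mem_rowStochastic hM)]
  have hsum : ∑ i, |v| i = ∑ i, (|v| ᵥ* M) i := by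
    simp only [← dotProduct_one]
    rw [← dotProduct_mulVec, one_vecMul_of_mem_rowStochastic hM]
  exact funext fun i => ((Finset.sum_eq_sum_iff_of_le fun i _ => hle i).1 hsum i (mem_univ i)).symm

lemma exists_pos_vecMul_eq_self [Nonempty n] (hM : M ∈ rowStochastic ℝ n)
    (hpos : ∀ i j, 0 < M i j) : ∃ v, (∀ i, 0 < v i) ∧ v ᵥ* M = v := by
  obtain ⟨v, hv0, hv⟩ := exists_ne_zero_vecMul_eq_self hM
  obtain ⟨j, hj⟩ := Function.ne_iff.1 hv0
  have habs := abs_vecMul_eq_self hM hv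
  refine ⟨|v|, fun i => ?_, habs⟩
  rw [← habs]
  exact Finset.sum_pos' (fun k _ => mul_nonneg (abs_nonneg _) (hpos k i).le)
    ⟨j, mem_univ j, mul_pos (abs_pos.2 hj) (hpos j i)⟩

end Stochastic

lemma exists_mul_le_and_mul_eq {n : Type*} [Finite n] [Nonempty n] {v l : n → ℝ}
    (hv : ∀ i, 0 < v i) (hl : ∀ i, 0 < l i) :
    ∃ c > 0, (∀ i, c * v i ≤ l i) ∧ ∃ b, c * v b = l b := by
  obtain ⟨b, hb⟩ := Finite.exists_min fun i => l i / v i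
  exact ⟨l b / v b, div_pos (hl b) (hv b), fun i => (le_div_iff₀ (hv i)).1 (hb i), b,
    div_mul_cancel₀ _ (hv b).ne'⟩

/-! ### Flow rates, profiles and shortfalls -/

section Network

variable {r : ℕ}

/-- The entry `e i j` of a state `(e, f)`, as a linear functional. -/
noncomputable def emptyCoord (i j : Fin r) : Mat r × Mat r →L[ℝ] ℝ :=
  (ContinuousLinearMap.proj j ∘L ContinuousLinearMap.proj i) ∘L ContinuousLinearMap.fst ℝ _ _

/-- The entry `f i j` of a state `(e, f)`, as a linear functional. -/
noncomputable def fullCoord (i j : Fin r) : Mat r × Mat r →L[ℝ] ℝ :=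
  (ContinuousLinearMap.proj j ∘L ContinuousLinearMap.proj i) ∘L ContinuousLinearMap.snd ℝ _ _

/-- The rate at which passengers are dropped off at station `i` in the state `(e, f)`. -/
noncomputable def dropoffRate (np : NetParams r) (i : Fin r) : Mat r × Mat r →L[ℝ] ℝ :=
  ∑ k, np.mu k i • fullCoord k i

/-- The rate at which idle cars become available at station `i` in the state `(e, f)`: empty cars
arriving from the other stations, and cars that drop off a passenger at `i` and stay there. -/
noncomputable def arrivalRate (np : NetParams r) (Q : Mat r) (i : Fin r) :
    Mat r × Mat r →L[ℝ] ℝ :=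
  (∑ k with k ≠ i, np.mu k i • emptyCoord k i) + Q i i • dropoffRate np i

/-- A positive solution `π` of the traffic equations `π = π P Q`: the departure rates of a
stationary flow through the network. -/
structure IsTrafficSolution (np : NetParams r) (Q : Mat r) (π : Fin r → ℝ) : Prop where
  pos : ∀ i, 0 < π i
  balance : ∀ i, π i = ∑ k, Q k i * ∑ l, π l * np.P l k

/-- The state `(e, f)` of the cars in transit when the departure rates are constantly `π`. Idle cars
are not counted, so the diagonal of `e` is zero. -/
noncomputable def transitProfile (np : NetParams r) (Q : Mat r) (π : Fin r → ℝ) : Mat r × Mat r :=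
  (fun i j => if i = j then 0 else Q i j * (∑ l, π l * np.P l i) / np.mu i j,
    fun i j => π i * np.P i j / np.mu i j)

/-- The amounts by which the entries of the state `p` fall short of `c` times the transit
profile. -/
noncomputable def shortfall (np : NetParams r) (Q : Mat r) (π : Fin r → ℝ) (c : ℝ)
    (p : Mat r × Mat r) : Mat r × Mat r :=
  (c • transitProfile np Q π - p)⁺

/-- The total shortfall of the state `p` from `c` times the transit profile. -/
noncomputable def deficit (np : NetParams r) (Q : Mat r) (π : Fin r → ℝ) (c : ℝ)
    (p : Mat r × Mat r) : ℝ :=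
  ∑ i, ∑ j, ((shortfall np Q π c p).1 i j + (shortfall np Q π c p).2 i j)

variable {np : NetParams r} {Q : Mat r} {π : Fin r → ℝ} {c a : ℝ} {p q : Mat r × Mat r}
  {i j : Fin r}

lemma integral_fst_apply {X : ℝ → Mat r × Mat r} (hX : Continuous X) (s t : ℝ) (i j : Fin r) :
    (∫ y in s..t, X y).1 i j = ∫ y in s..t, (X y).1 i j :=
  ((emptyCoord i j).intervalIntegral_comp_comm (hX.intervalIntegrable s t)).symm

lemma integral_snd_apply {X : ℝ → Mat r × Mat r} (hX : Continuous X) (s t : ℝ) (i j : Fin r) :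
    (∫ y in s..t, X y).2 i j = ∫ y in s..t, (X y).2 i j :=
  ((fullCoord i j).intervalIntegral_comp_comm (hX.intervalIntegrable s t)).symm

lemma dropoffRate_apply (i : Fin r) (p : Mat r × Mat r) :
    dropoffRate np i p = ∑ k, np.mu k i * p.2 k i := by
  simp [dropoffRate, fullCoord]

lemma arrivalRate_apply (i : Fin r) (p : Mat r × Mat r) :
    arrivalRate np Q i p = (∑ k with k ≠ i, np.mu k i * p.1 k i) + Q i i * dropoffRate np i p := by
  simp [arrivalRate, emptyCoord]

lemma dropoffRate_nonneg (hp : 0 ≤ p) (i : Fin r) : 0 ≤ dropoffRate np i p := by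
  rw [dropoffRate_apply]
  exact Finset.sum_nonneg fun k _ => mul_nonneg (np.mu_pos k i).le (hp.2 k i)

lemma mu_mul_le_dropoffRate (hp : 0 ≤ p) (k i : Fin r) :
    np.mu k i * p.2 k i ≤ dropoffRate np i p := by
  rw [dropoffRate_apply]
  exact Finset.single_le_sum (f := fun l => np.mu l i * p.2 l i)
    (fun l _ => mul_nonneg (np.mu_pos l i).le (hp.2 l i)) (mem_univ k)

lemma mul_dropoffRate_le_arrivalRate (hp : 0 ≤ p) (i : Fin r) :
    Q i i * dropoffRate np i p ≤ arrivalRate np Q i p := by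
  rw [arrivalRate_apply]
  exact le_add_of_nonneg_left <|
    Finset.sum_nonneg fun k _ => mul_nonneg (np.mu_pos k i).le (hp.1 k i)

lemma arrivalRate_nonneg (hQ : IsRouting Q) (hp : 0 ≤ p) (i : Fin r) : 0 ≤ arrivalRate np Q i p :=
  (mul_nonneg (hQ.1 i i) (dropoffRate_nonneg hp i)).trans (mul_dropoffRate_le_arrivalRate hp i)

lemma dropoffRate_mono (hpq : p ≤ q) (i : Fin r) : dropoffRate np i p ≤ dropoffRate np i q := by
  have hsub := dropoffRate_nonneg (np := np) (sub_nonneg.2 hpq) i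
  rwa [map_sub, sub_nonneg] at hsub

lemma arrivalRate_mono (hQ : IsRouting Q) (hpq : p ≤ q) (i : Fin r) :
    arrivalRate np Q i p ≤ arrivalRate np Q i q := by
  have hsub := arrivalRate_nonneg (np := np) hQ (sub_nonneg.2 hpq) i
  rwa [map_sub, sub_nonneg] at hsub

lemma sum_sum_mu_mul_full (p : Mat r × Mat r) :
    ∑ i, ∑ j, np.mu i j * p.2 i j = ∑ i, dropoffRate np i p := by
  simp only [dropoffRate_apply]
  exact Finset.sum_comm

lemma sum_ne_add_diag (g : Fin r → ℝ) (i : Fin r) : (∑ k with k ≠ i, g k) + g i = ∑ k, g k := by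
  rw [Finset.filter_ne', Finset.sum_erase_add _ _ (mem_univ i)]

/- Cars dropped off at `i` either leave empty for another station or stay, so the net flow into the
empty transits is the total drop-off rate minus the total arrival rate. -/
lemma sum_sum_empty_netFlow (hQ : IsRouting Q) (p : Mat r × Mat r) :
    ∑ i, ∑ j with j ≠ i, (Q i j * dropoffRate np i p - np.mu i j * p.1 i j)
      = ∑ i, dropoffRate np i p - ∑ i, arrivalRate np Q i p := by
  have hout : ∀ i, ∑ j with j ≠ i, Q i j * dropoffRate np i p
      = dropoffRate np i p - Q i i * dropoffRate np i p := fun i => by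
    rw [← Finset.sum_mul, eq_sub_iff_add_eq.2 (sum_ne_add_diag (Q i) i), hQ.2 i, sub_mul, one_mul]
  have hin : ∑ i, ∑ j with j ≠ i, np.mu i j * p.1 i j
      = ∑ i, ∑ k with k ≠ i, np.mu k i * p.1 k i := by
    simp only [Finset.sum_filter]
    rw [Finset.sum_comm]
    simp only [ne_comm]
  simp only [Finset.sum_sub_distrib, hout, hin, arrivalRate_apply, Finset.sum_add_distrib]
  ring

lemma mu_mul_transitProfile_snd (i j : Fin r) :
    np.mu i j * (transitProfile np Q π).2 i j = π i * np.P i j :=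
  mul_div_cancel₀ _ (np.mu_pos i j).ne'

lemma dropoffRate_transitProfile (i : Fin r) :
    dropoffRate np i (transitProfile np Q π) = ∑ l, π l * np.P l i := by
  simp only [dropoffRate_apply, mu_mul_transitProfile_snd]

lemma mu_mul_transitProfile_fst (hij : i ≠ j) :
    np.mu i j * (transitProfile np Q π).1 i j
      = Q i j * dropoffRate np i (transitProfile np Q π) := by
  rw [dropoffRate_transitProfile]
  simp only [transitProfile, if_neg hij]
  exact mul_div_cancel₀ _ (np.mu_pos i j).ne'

lemma arrivalRate_transitProfile (hπ : IsTrafficSolution np Q π) (i : Fin r) :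
    arrivalRate np Q i (transitProfile np Q π) = π i := by
  rw [arrivalRate_apply, hπ.balance i, ← sum_ne_add_diag _ i, dropoffRate_transitProfile]
  refine congrArg (· + _) (Finset.sum_congr rfl fun k hk => ?_)
  rw [mu_mul_transitProfile_fst (mem_filter.1 hk).2, dropoffRate_transitProfile]

lemma transitProfile_snd_pos (hπ : IsTrafficSolution np Q π) (hP : ∀ i j, 0 < np.P i j)
    (i j : Fin r) : 0 < (transitProfile np Q π).2 i j :=
  div_pos (mul_pos (hπ.pos i) (hP i j)) (np.mu_pos i j)

lemma transitProfile_nonneg (hQ : IsRouting Q) (hπ : IsTrafficSolution np Q π) :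
    0 ≤ transitProfile np Q π := by
  refine ⟨fun i j => ?_, fun i j =>
    div_nonneg (mul_nonneg (hπ.pos i).le (np.P_nonneg i j)) (np.mu_pos i j).le⟩
  rcases eq_or_ne i j with hij | hij
  · simp [transitProfile, hij]
  · simp only [transitProfile, if_neg hij]
    exact div_nonneg (mul_nonneg (hQ.1 i j)
      (Finset.sum_nonneg fun l _ => mul_nonneg (hπ.pos l).le (np.P_nonneg l i))) (np.mu_pos i j).le

lemma shortfall_nonneg (c : ℝ) (p : Mat r × Mat r) : 0 ≤ shortfall np Q π c p :=
  posPart_nonneg _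

lemma continuous_shortfall (c : ℝ) : Continuous (shortfall np Q π c) :=
  .prodMk
    (continuous_pi fun i => continuous_pi fun j =>
      (continuous_const.sub (emptyCoord i j).continuous).sup continuous_const)
    (continuous_pi fun i => continuous_pi fun j =>
      (continuous_const.sub (fullCoord i j).continuous).sup continuous_const)

lemma dropoffRate_transitProfile_sub_le (c : ℝ) (p : Mat r × Mat r) (i : Fin r) :
    c * dropoffRate np i (transitProfile np Q π) - dropoffRate np i p
      ≤ dropoffRate np i (shortfall np Q π c p) := by
  have hmono := dropoffRate_mono (np := np) (le_posPart (c • transitProfile np Q π - p)) i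
  rwa [map_sub, map_smul, smul_eq_mul] at hmono

lemma sub_arrivalRate_shortfall_le (hQ : IsRouting Q) (hπ : IsTrafficSolution np Q π) (c : ℝ)
    (p : Mat r × Mat r) (i : Fin r) :
    c * π i - arrivalRate np Q i (shortfall np Q π c p) ≤ arrivalRate np Q i p := by
  have hmono := arrivalRate_mono (np := np) hQ (le_posPart (c • transitProfile np Q π - p)) i
  rw [map_sub, map_smul, smul_eq_mul, arrivalRate_transitProfile hπ] at hmono
  exact sub_le_comm.1 hmono

lemma deficit_nonneg (c : ℝ) (p : Mat r × Mat r) : 0 ≤ deficit np Q π c p :=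
  Finset.sum_nonneg fun i _ => Finset.sum_nonneg fun j _ =>
    add_nonneg ((shortfall_nonneg c p).1 i j) ((shortfall_nonneg c p).2 i j)

lemma deficit_eq_zero_iff : deficit np Q π c p = 0 ↔ c • transitProfile np Q π ≤ p := by
  have hshort : 0 ≤ shortfall np Q π c p := shortfall_nonneg c p
  have hentry : ∀ i j, 0 ≤ (shortfall np Q π c p).1 i j + (shortfall np Q π c p).2 i j :=
    fun i j => add_nonneg (hshort.1 i j) (hshort.2 i j)
  rw [← sub_nonpos, ← posPart_eq_zero, ← shortfall, deficit,
    Finset.sum_eq_zero_iff_of_nonneg fun i _ => Finset.sum_nonneg fun j _ => hentry i j]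
  simp only [Finset.sum_eq_zero_iff_of_nonneg fun j _ => hentry _ j, mem_univ, true_imp_iff,
    add_eq_zero_iff_of_nonneg (hshort.1 _ _) (hshort.2 _ _), forall_and, Prod.ext_iff, funext_iff,
    Prod.fst_zero, Prod.snd_zero, Pi.zero_apply]

lemma level_anti (hQ : IsRouting Q) (hπ : IsTrafficSolution np Q π) (hac : a ≤ c)
    (hc : c • transitProfile np Q π ≤ p) : a • transitProfile np Q π ≤ p :=
  (smul_le_smul_of_nonneg_right hac (transitProfile_nonneg hQ hπ)).trans hc

lemma mul_le_arrivalRate (hQ : IsRouting Q) (hπ : IsTrafficSolution np Q π)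
    (ha : a • transitProfile np Q π ≤ p) (i : Fin r) : a * π i ≤ arrivalRate np Q i p := by
  have hmono := arrivalRate_mono (np := np) hQ ha i
  rwa [map_smul, smul_eq_mul, arrivalRate_transitProfile hπ] at hmono

lemma mul_add_excess_le_arrivalRate (hQ : IsRouting Q) (hπ : IsTrafficSolution np Q π)
    (ha : a • transitProfile np Q π ≤ p) (k i : Fin r) :
    a * π i + Q i i * (np.mu k i * (p.2 k i - a * (transitProfile np Q π).2 k i))
      ≤ arrivalRate np Q i p := by
  have hexcess : 0 ≤ p - a • transitProfile np Q π := sub_nonneg.2 ha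
  have hle := (mul_le_mul_of_nonneg_left (mu_mul_le_dropoffRate (np := np) hexcess k i)
    (hQ.1 i i)).trans (mul_dropoffRate_le_arrivalRate hexcess i)
  rw [map_sub, map_smul, smul_eq_mul, arrivalRate_transitProfile hπ] at hle
  exact le_sub_iff_add_le'.1 hle

lemma mul_le_arrivalRate_of_full_gain {b : Fin r} {η θ : ℝ} (hQ : IsRouting Q)
    (hπ : IsTrafficSolution np Q π) (hη : 0 ≤ η) (hθ : θ * π i ≤ Q i i * (π b * np.P b i))
    (ha : a • transitProfile np Q π ≤ p)
    (hgain : (a + η) * (transitProfile np Q π).2 b i ≤ p.2 b i) :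
    (a + η * θ) * π i ≤ arrivalRate np Q i p := by
  have hexcess : η * (π b * np.P b i)
      ≤ np.mu b i * (p.2 b i - a * (transitProfile np Q π).2 b i) := by
    rw [← mu_mul_transitProfile_snd (Q := Q), mul_left_comm]
    exact mul_le_mul_of_nonneg_left (by linarith) (np.mu_pos b i).le
  linarith [mul_add_excess_le_arrivalRate hQ hπ ha b i,
    mul_le_mul_of_nonneg_left hexcess (hQ.1 i i), mul_le_mul_of_nonneg_left hθ hη]

lemma MemT.nonneg {e f : Mat r} (h : MemT e f) : 0 ≤ (e, f) :=
  ⟨fun i j => (h.1 i j).1, fun i j => (h.2.1 i j).1⟩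

lemma isCompact_setOf_memT : IsCompact {p : Mat r × Mat r | MemT p.1 p.2} := by
  refine (isCompact_Icc (a := 0) (b := 1)).of_isClosed_subset ?_ fun p hp =>
    ⟨hp.nonneg, fun i j => (hp.1 i j).2, fun i j => (hp.2.1 i j).2⟩
  have hempty : ∀ i j : Fin r, Continuous fun p : Mat r × Mat r => p.1 i j :=
    fun i j => (emptyCoord i j).continuous
  have hfull : ∀ i j : Fin r, Continuous fun p : Mat r × Mat r => p.2 i j :=
    fun i j => (fullCoord i j).continuous
  simp only [MemT, Set.ofPred_and, Set.ofPred_forall]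
  refine .inter
    (isClosed_iInter fun i => isClosed_iInter fun j => isClosed_Icc.preimage (hempty i j)) <| .inter
    (isClosed_iInter fun i => isClosed_iInter fun j => isClosed_Icc.preimage (hfull i j)) <|
    isClosed_eq ?_ continuous_const
  exact continuous_finsetSum _ fun i _ => continuous_finsetSum _ fun j _ =>
    (hempty i j).add (hfull i j)

open scoped Matrix in
/- `P * Q` is a positive stochastic matrix: `P` is positive and `Q` has a positive diagonal. -/
lemma exists_trafficSolution [Nonempty (Fin r)] (hQ : IsRouting Q) (hP : ∀ i j, 0 < np.P i j)
    (hQd : ∀ i, 0 < Q i i) :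
    ∃ π, IsTrafficSolution np Q π ∧ (∀ i, π i ≤ np.lam i) ∧ ∃ b, π b = np.lam b := by
  have hmem : Matrix.of np.P * Matrix.of Q ∈ Matrix.rowStochastic ℝ (Fin r) := mul_mem
    (Matrix.mem_rowStochastic_iff_sum.2 ⟨np.P_nonneg, np.P_rowsum⟩)
    (Matrix.mem_rowStochastic_iff_sum.2 hQ)
  have hpos : ∀ i j, 0 < (Matrix.of np.P * Matrix.of Q) i j := fun i j =>
    Finset.sum_pos' (fun k _ => mul_nonneg (np.P_nonneg i k) (hQ.1 k j))
      ⟨j, mem_univ j, mul_pos (hP i j) (hQd j)⟩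
  obtain ⟨v, hv, hvM⟩ := exists_pos_vecMul_eq_self hmem hpos
  obtain ⟨c, hc, hle, b, hb⟩ := exists_mul_le_and_mul_eq hv np.lam_pos
  refine ⟨c • v, ⟨fun i => mul_pos hc (hv i), fun i => ?_⟩, hle, b, hb⟩
  have hbalance : ((c • v) ᵥ* Matrix.of np.P ᵥ* Matrix.of Q) i = (c • v) i := by
    rw [Matrix.vecMul_vecMul, Matrix.smul_vecMul, hvM]
  rw [← hbalance, Matrix.vecMul, dotProduct]
  exact Finset.sum_congr rfl fun k _ => mul_comm (_ : ℝ) _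

end Network

/-! ### Fluid trajectories -/

section Trajectory

variable {r : ℕ}

/-- A fluid trajectory in increment form: `x` is the state `(e, f)` and `D` the cumulative
departures `λ (t - u)`. It is defined on all of `ℝ`, but the dynamics is only imposed on `[0, ∞)`.
The field `departures_eq` encodes the complementarity condition on `u`: station `i` serves at full
rate `λ i` as long as it is nonempty. -/
structure IsFluidTrajectory (np : NetParams r) (Q : Mat r) (x : ℝ → Mat r × Mat r)
    (D : ℝ → Fin r → ℝ) : Prop where
  continuous : Continuous x
  continuous_departures : ∀ i, Continuous fun t => D t i
  memT : ∀ t, MemT (x t).1 (x t).2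
  full_sub : ∀ i j s t, 0 ≤ s → s ≤ t → (x t).2 i j - (x s).2 i j =
    np.P i j * (D t i - D s i) - np.mu i j * ∫ y in s..t, (x y).2 i j
  empty_sub : ∀ i j, i ≠ j → ∀ s t, 0 ≤ s → s ≤ t → (x t).1 i j - (x s).1 i j =
    (∫ y in s..t, Q i j * dropoffRate np i (x y)) - np.mu i j * ∫ y in s..t, (x y).1 i j
  idle_sub : ∀ i s t, 0 ≤ s → s ≤ t → (x t).1 i i - (x s).1 i i =
    (∫ y in s..t, arrivalRate np Q i (x y)) - (D t i - D s i)
  departures_le : ∀ i s t, 0 ≤ s → s ≤ t → D t i - D s i ≤ np.lam i * (t - s)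
  departures_eq : ∀ i s t, 0 ≤ s → s ≤ t → (∀ y, s < y → y ≤ t → 0 < (x y).1 i i) →
    D t i - D s i = np.lam i * (t - s)

variable {np : NetParams r} {Q : Mat r} {e f : ℝ → Mat r} {u : ℝ → Fin r → ℝ}

lemma continuous_comp_max_zero {X : Type*} [TopologicalSpace X] {g : ℝ → X}
    (hg : ContinuousOn g (Set.Ici 0)) : Continuous fun t => g (max t 0) :=
  hg.comp_continuous (continuous_id.max continuous_const) fun t => le_max_right t 0

lemma integral_comp_max_zero (g : ℝ → ℝ) {t : ℝ} (ht : 0 ≤ t) :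
    ∫ s in (0 : ℝ)..t, g (max s 0) = ∫ s in (0 : ℝ)..t, g s := by
  refine integral_congr fun s hs => ?_
  rw [Set.uIcc_of_le ht] at hs
  simp only [max_eq_left hs.1]

/-- The state `(e, f)`, extended to negative times by its value at time `0`. -/
def extendedState (e f : ℝ → Mat r) (t : ℝ) : Mat r × Mat r :=
  (e (max t 0), f (max t 0))

/-- The departures `λ (t - u)`, extended to negative times by their value at time `0`. -/
def extendedDepartures (np : NetParams r) (u : ℝ → Fin r → ℝ) (t : ℝ) (i : Fin r) : ℝ :=
  np.lam i * (max t 0 - u (max t 0) i)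

namespace IsFluidSol

lemma continuous_extendedState (h : IsFluidSol np Q e f u) : Continuous (extendedState e f) :=
  .prodMk
    (continuous_pi fun i => continuous_pi fun j => continuous_comp_max_zero (h.cont_e i j))
    (continuous_pi fun i => continuous_pi fun j => continuous_comp_max_zero (h.cont_f i j))

lemma integral_empty (h : IsFluidSol np Q e f u) {t : ℝ} (ht : 0 ≤ t) (i j : Fin r) :
    ∫ s in (0 : ℝ)..t, e s i j = (∫ s in (0 : ℝ)..t, extendedState e f s).1 i j := by
  rw [integral_fst_apply h.continuous_extendedState]
  exact (integral_comp_max_zero (fun s => e s i j) ht).symm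

lemma integral_full (h : IsFluidSol np Q e f u) {t : ℝ} (ht : 0 ≤ t) (i j : Fin r) :
    ∫ s in (0 : ℝ)..t, f s i j = (∫ s in (0 : ℝ)..t, extendedState e f s).2 i j := by
  rw [integral_snd_apply h.continuous_extendedState]
  exact (integral_comp_max_zero (fun s => f s i j) ht).symm

lemma integral_sub_integral (h : IsFluidSol np Q e f u) (L : Mat r × Mat r →L[ℝ] ℝ) (s t : ℝ) :
    L (∫ y in (0 : ℝ)..t, extendedState e f y) - L (∫ y in (0 : ℝ)..s, extendedState e f y)
      = ∫ y in s..t, L (extendedState e f y) := by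
  have hint := fun a b => h.continuous_extendedState.intervalIntegrable (μ := volume) a b
  rw [← map_sub, integral_interval_sub_left (hint 0 t) (hint 0 s),
    L.intervalIntegral_comp_comm (hint s t)]

lemma extendedState_full_eq (h : IsFluidSol np Q e f u) {t : ℝ} (ht : 0 ≤ t) (i j : Fin r) :
    (extendedState e f t).2 i j = f 0 i j + np.P i j * extendedDepartures np u t i
      - np.mu i j * fullCoord i j (∫ y in (0 : ℝ)..t, extendedState e f y) := by
  simp only [extendedState, extendedDepartures, max_eq_left ht]
  rw [h.eq_f i j t ht, h.integral_full ht]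
  exact congrArg (f 0 i j + · - _) (mul_assoc _ _ _ |>.trans (mul_left_comm _ _ _))

lemma extendedState_empty_eq (h : IsFluidSol np Q e f u) {t : ℝ} (ht : 0 ≤ t) {i j : Fin r}
    (hij : i ≠ j) : (extendedState e f t).1 i j = e 0 i j
      + Q i j * dropoffRate np i (∫ y in (0 : ℝ)..t, extendedState e f y)
      - np.mu i j * emptyCoord i j (∫ y in (0 : ℝ)..t, extendedState e f y) := by
  have heq := h.eq_e_off i j hij t ht
  simp only [h.integral_empty ht, h.integral_full ht, ← dropoffRate_apply] at heq
  simp only [extendedState, max_eq_left ht] at heq ⊢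
  exact heq.trans (sub_add_eq_add_sub _ _ _)

lemma extendedState_idle_eq (h : IsFluidSol np Q e f u) {t : ℝ} (ht : 0 ≤ t) (i : Fin r) :
    (extendedState e f t).1 i i = e 0 i i - extendedDepartures np u t i
      + arrivalRate np Q i (∫ y in (0 : ℝ)..t, extendedState e f y) := by
  have heq := h.eq_e_diag i t ht
  simp only [h.integral_empty ht, h.integral_full ht, ← dropoffRate_apply, add_assoc,
    ← arrivalRate_apply] at heq
  simp only [extendedState, extendedDepartures, max_eq_left ht] at heq ⊢
  exact heq

/- Summing the equations for `f i j` over `j` expresses `u i` through continuous functions. -/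
lemma continuous_extendedDepartures (h : IsFluidSol np Q e f u) (i : Fin r) :
    Continuous fun t => extendedDepartures np u t i := by
  have hsum : ∀ t, extendedDepartures np u t i = ∑ j, ((extendedState e f t).2 i j - f 0 i j
      + np.mu i j * fullCoord i j (∫ y in (0 : ℝ)..max t 0, extendedState e f y)) := fun t => by
    have hfull : ∀ j, (extendedState e f t).2 i j - f 0 i j + np.mu i j
        * fullCoord i j (∫ y in (0 : ℝ)..max t 0, extendedState e f y)
        = np.P i j * extendedDepartures np u t i := fun j => by
      have heq := h.extendedState_full_eq (le_max_right t 0) i j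
      simp only [extendedState, extendedDepartures, max_eq_left (le_max_right t 0)] at heq ⊢
      rw [heq]
      ring
    simp only [hfull, ← Finset.sum_mul, np.P_rowsum, one_mul]
  have hX := h.continuous_extendedState
  have hint : Continuous fun t => ∫ y in (0 : ℝ)..max t 0, extendedState e f y :=
    (continuous_primitive (fun a b => hX.intervalIntegrable a b) 0).comp
      (continuous_id.max continuous_const)
  simp only [hsum]
  exact continuous_finsetSum _ fun j _ => (((fullCoord i j).continuous.comp hX).sub
    continuous_const).add (continuous_const.mul ((fullCoord i j).continuous.comp hint))

lemma continuousOn_u (h : IsFluidSol np Q e f u) (i : Fin r) :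
    ContinuousOn (fun t => u t i) (Set.Ici 0) := by
  refine (continuous_id.sub
    ((h.continuous_extendedDepartures i).div_const (np.lam i))).continuousOn.congr fun t ht => ?_
  rw [Set.mem_Ici] at ht
  simp only [Pi.sub_apply, id_eq, extendedDepartures, max_eq_left ht,
    mul_div_cancel_left₀ _ (np.lam_pos i).ne', sub_sub_cancel]

/- By complementarity `(s, t]` is a null set for the Stieltjes measure of the continuous `u i`. -/
lemma u_eq_of_pos (h : IsFluidSol np Q e f u) {i : Fin r} {s t : ℝ} (hs : 0 ≤ s) (hst : s ≤ t)
    (hpos : ∀ y, s < y → y ≤ t → 0 < e y i i) : u t i = u s i := by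
  have hcompl := h.compl i
  simp only [lsMeasure, dif_pos (h.u_mono i)] at hcompl
  rw [lintegral_eq_zero_iff' ((h.cont_e i i).aemeasurable measurableSet_Ici).ennreal_ofReal,
    EventuallyEq, ae_restrict_iff' measurableSet_Ici] at hcompl
  have hnull : (h.u_mono i).stieltjesFunction.measure (Set.Ioc s t) = 0 := by
    refine measure_mono_null (fun y hy => ?_) (ae_iff.1 hcompl)
    simp only [Set.mem_ofPred_eq, Set.mem_Ici, Pi.zero_apply, ENNReal.ofReal_eq_zero, not_forall,
      not_le]
    exact ⟨hs.trans hy.1.le, hpos y hy.1 hy.2⟩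
  have hright : ∀ y, 0 ≤ y → Function.rightLim (fun t => u t i) y = u y i := fun y hy =>
    ContinuousWithinAt.rightLim_eq <|
      (h.continuousOn_u i y hy).mono (Set.Ici_subset_Ici.2 hy)
  rw [StieltjesFunction.measure_Ioc, ENNReal.ofReal_eq_zero, Monotone.stieltjesFunction_eq,
    Monotone.stieltjesFunction_eq, hright t (hs.trans hst), hright s hs, sub_nonpos] at hnull
  exact hnull.antisymm (h.u_mono i hst)

lemma isFluidTrajectory (h : IsFluidSol np Q e f u) :
    IsFluidTrajectory np Q (extendedState e f) (extendedDepartures np u) where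
  continuous := h.continuous_extendedState
  continuous_departures := h.continuous_extendedDepartures
  memT t := h.mem_T _ (le_max_right t 0)
  full_sub i j s t hs hst := by
    rw [h.extendedState_full_eq hs, h.extendedState_full_eq (hs.trans hst)]
    have hfull : _ = ∫ y in s..t, (extendedState e f y).2 i j :=
      h.integral_sub_integral (fullCoord i j) s t
    linear_combination -np.mu i j * hfull
  empty_sub i j hij s t hs hst := by
    rw [h.extendedState_empty_eq hs hij, h.extendedState_empty_eq (hs.trans hst) hij]
    have hempty : _ = ∫ y in s..t, (extendedState e f y).1 i j :=
      h.integral_sub_integral (emptyCoord i j) s t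
    have hdropoff : Q i j * dropoffRate np i _ - Q i j * dropoffRate np i _
        = ∫ y in s..t, Q i j * dropoffRate np i (extendedState e f y) :=
      h.integral_sub_integral (Q i j • dropoffRate np i) s t
    linear_combination hdropoff - np.mu i j * hempty
  idle_sub i s t hs hst := by
    rw [h.extendedState_idle_eq hs, h.extendedState_idle_eq (hs.trans hst),
      ← h.integral_sub_integral]
    ring
  departures_le i s t hs hst := by
    simp only [extendedDepartures, max_eq_left hs, max_eq_left (hs.trans hst)]
    rw [← mul_sub]
    exact mul_le_mul_of_nonneg_left (by linarith [h.u_mono i hst]) (np.lam_pos i).le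
  departures_eq i s t hs hst hpos := by
    have hu : u t i = u s i := h.u_eq_of_pos hs hst fun y hsy hyt => by
      have := hpos y hsy hyt
      simpa only [extendedState, max_eq_left (hs.trans hsy.le)] using this
    simp only [extendedDepartures, max_eq_left hs, max_eq_left (hs.trans hst), hu]
    ring

end IsFluidSol

end Trajectory

/-! ### The deficit along a trajectory -/

section Deficit

variable {r : ℕ} {np : NetParams r} {Q : Mat r} {π : Fin r → ℝ} {x : ℝ → Mat r × Mat r}
  {D : ℝ → Fin r → ℝ} {H : ℝ → ℝ} {c s t : ℝ} {p : Mat r × Mat r} {i j b : Fin r}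

/-- `H` bounds the shortage of the cumulative departures `D` relative to the constant rate `ρ`. -/
structure IsShortageMajorant (D : ℝ → ℝ) (ρ : ℝ) (H : ℝ → ℝ) : Prop where
  continuous : Continuous H
  monotoneOn : MonotoneOn H (Set.Ici 0)
  shortage_le : ∀ s t, 0 ≤ s → s ≤ t → ρ * (t - s) - (D t - D s) ≤ H t - H s

lemma shortfall_fst_self (hp : 0 ≤ p) (c : ℝ) (i : Fin r) : (shortfall np Q π c p).1 i i = 0 := by
  have hdiag : (c • transitProfile np Q π - p).1 i i ≤ 0 := by
    simpa [transitProfile] using hp.1 i i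
  exact posPart_eq_zero.2 hdiag

namespace IsFluidTrajectory

lemma nonneg (h : IsFluidTrajectory np Q x D) (t : ℝ) : 0 ≤ x t :=
  (h.memT t).nonneg

lemma continuous_arrivalRate (h : IsFluidTrajectory np Q x D) (i : Fin r) :
    Continuous fun y => arrivalRate np Q i (x y) :=
  (arrivalRate np Q i).continuous.comp h.continuous

lemma continuous_shortfall_comp (h : IsFluidTrajectory np Q x D) (c : ℝ) :
    Continuous fun y => shortfall np Q π c (x y) :=
  (continuous_shortfall c).comp h.continuous

lemma continuous_map_shortfall (h : IsFluidTrajectory np Q x D) (L : Mat r × Mat r →L[ℝ] ℝ)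
    (c : ℝ) : Continuous fun y => L (shortfall np Q π c (x y)) :=
  L.continuous.comp (h.continuous_shortfall_comp c)

lemma integral_map_shortfall (h : IsFluidTrajectory np Q x D) (L : Mat r × Mat r →L[ℝ] ℝ)
    (c s t : ℝ) : ∫ y in s..t, L (shortfall np Q π c (x y))
      = L (∫ y in s..t, shortfall np Q π c (x y)) :=
  L.intervalIntegral_comp_comm ((h.continuous_shortfall_comp c).intervalIntegrable s t)

lemma integral_shortfall_sub (h : IsFluidTrajectory np Q x D) (c s t : ℝ) :
    (∫ y in (0 : ℝ)..t, shortfall np Q π c (x y)) - (∫ y in (0 : ℝ)..s, shortfall np Q π c (x y))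
      = ∫ y in s..t, shortfall np Q π c (x y) :=
  have hint := fun a b =>
    (h.continuous_shortfall_comp (π := π) c).intervalIntegrable (μ := volume) a b
  integral_interval_sub_left (hint 0 t) (hint 0 s)

lemma integral_shortfall_nonneg (h : IsFluidTrajectory np Q x D) (c : ℝ) (hst : s ≤ t) :
    0 ≤ ∫ y in s..t, shortfall np Q π c (x y) := by
  refine ⟨fun i j => ?_, fun i j => ?_⟩
  · rw [integral_fst_apply (h.continuous_shortfall_comp c)]
    exact integral_nonneg hst fun y _ => (shortfall_nonneg c (x y)).1 i j
  · rw [integral_snd_apply (h.continuous_shortfall_comp c)]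
    exact integral_nonneg hst fun y _ => (shortfall_nonneg c (x y)).2 i j

/- Up to the last time `τ` at which the station is empty the departures are the arrivals minus the
change of the idle cars; after `τ` they occur at the full rate. -/
lemma departures_sub_ge (h : IsFluidTrajectory np Q x D) {ρ : ℝ → ℝ} (hρ : Continuous ρ)
    (hρ0 : ∀ y, 0 ≤ ρ y) (hs : 0 ≤ s) (hst : s ≤ t)
    (hle : ∀ y, s ≤ y → y ≤ t → c - ρ y ≤ arrivalRate np Q i (x y)) (hc : c ≤ np.lam i) :
    c * (t - s) - ∫ y in s..t, ρ y ≤ D t i - D s i := by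
  have hidle : Continuous fun y => (x y).1 i i := (emptyCoord i i).continuous.comp h.continuous
  have hidle_pos : ∀ y, (x y).1 i i ≠ 0 → 0 < (x y).1 i i :=
    fun y => ((h.nonneg y).1 i i).lt_of_ne'
  have hfull : ∀ τ, s ≤ τ → τ ≤ t → (∀ y, τ < y → y ≤ t → 0 < (x y).1 i i) →
      c * (t - τ) - ∫ y in τ..t, ρ y ≤ D t i - D τ i := fun τ hsτ hτt hpos => by
    have hρint : 0 ≤ ∫ y in τ..t, ρ y := integral_nonneg hτt fun y _ => hρ0 y
    rw [h.departures_eq i τ t (hs.trans hsτ) hτt hpos]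
    linarith [mul_le_mul_of_nonneg_right hc (sub_nonneg.2 hτt)]
  by_cases hempty : ∃ y ∈ Set.Icc s t, (x y).1 i i = 0
  · obtain ⟨τ, ⟨⟨hsτ, hτt⟩, hτ⟩, hτmax⟩ :=
      (isCompact_Icc.inter_right (isClosed_eq hidle continuous_const)).exists_isGreatest hempty
    have hτ : (x τ).1 i i = 0 := hτ
    have hafter := hfull τ hsτ hτt fun y hτy hyt => hidle_pos y fun hy =>
      hτy.not_ge (hτmax ⟨⟨hsτ.trans hτy.le, hyt⟩, hy⟩)
    have harrivals : ∫ y in s..τ, (c - ρ y) ≤ ∫ y in s..τ, arrivalRate np Q i (x y) :=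
      integral_mono_on hsτ ((continuous_const.sub hρ).intervalIntegrable _ _)
        ((h.continuous_arrivalRate i).intervalIntegrable _ _)
        fun y hy => hle y hy.1 (hy.2.trans hτt)
    rw [integral_sub intervalIntegrable_const (hρ.intervalIntegrable _ _),
      intervalIntegral.integral_const, smul_eq_mul] at harrivals
    have hsplit := integral_add_adjacent_intervals
      (hρ.intervalIntegrable (μ := volume) s τ) (hρ.intervalIntegrable τ t)
    have hidle_s : 0 ≤ (x s).1 i i := (h.nonneg s).1 i i
    linarith [h.idle_sub i s τ hs hsτ]
  · push Not at hempty
    exact hfull s le_rfl hst fun y hsy hyt => hidle_pos y (hempty y ⟨hsy.le, hyt⟩)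

lemma departures_mono (h : IsFluidTrajectory np Q x D) (hQ : IsRouting Q) (hs : 0 ≤ s)
    (hst : s ≤ t) : D s i ≤ D t i := by
  have hge := h.departures_sub_ge (c := 0) (i := i) continuous_const (fun _ => le_rfl) hs hst
    (fun y _ _ => (sub_self (0 : ℝ)).trans_le (arrivalRate_nonneg hQ (h.nonneg y) i))
    (np.lam_pos i).le
  simpa using hge

lemma isShortageMajorant_shortfall (h : IsFluidTrajectory np Q x D) (hQ : IsRouting Q)
    (hπ : IsTrafficSolution np Q π) (hc : c * π i ≤ np.lam i) :
    IsShortageMajorant (D · i) (c * π i)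
      fun t => arrivalRate np Q i (∫ y in (0 : ℝ)..t, shortfall np Q π c (x y)) where
  continuous := (arrivalRate np Q i).continuous.comp <|
    continuous_primitive (fun _ _ => (h.continuous_shortfall_comp c).intervalIntegrable _ _) 0
  monotoneOn s _ t _ hst := by
    refine arrivalRate_mono hQ (sub_nonneg.1 ?_) i
    rw [h.integral_shortfall_sub]
    exact h.integral_shortfall_nonneg c hst
  shortage_le s t hs hst := by
    have hge := h.departures_sub_ge
      (h.continuous_map_shortfall (π := π) (arrivalRate np Q i) c)
      (fun y => arrivalRate_nonneg hQ (shortfall_nonneg c (x y)) i) hs hst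
      (fun y _ _ => sub_arrivalRate_shortfall_le hQ hπ c (x y) i) hc
    rw [← map_sub, h.integral_shortfall_sub, ← h.integral_map_shortfall]
    exact sub_le_comm.1 hge

lemma isShortageMajorant_idleness (h : IsFluidTrajectory np Q x D) (i : Fin r) :
    IsShortageMajorant (D · i) (np.lam i) fun t => np.lam i * t - D t i where
  continuous := (continuous_const.mul continuous_id).sub (h.continuous_departures i)
  monotoneOn s hs t _ hst := by
    linarith [h.departures_le i s t hs hst]
  shortage_le s t _ _ := by linarith

lemma full_shortfall_sub_le (h : IsFluidTrajectory np Q x D)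
    (hH : IsShortageMajorant (D · i) (c * π i) H) (hs : 0 ≤ s) (hst : s ≤ t) (j : Fin r) :
    (shortfall np Q π c (x t)).2 i j - (shortfall np Q π c (x s)).2 i j ≤
      np.P i j * (H t - H s)
        - np.mu i j * (∫ y in s..t, shortfall np Q π c (x y)).2 i j := by
  set F := (transitProfile np Q π).2 i j
  have hf : Continuous fun y => (x y).2 i j := (fullCoord i j).continuous.comp h.continuous
  rw [integral_snd_apply (h.continuous_shortfall_comp c), mul_sub]
  refine posPart_sub_le_of_sub_le (g := fun y => c * F - (x y).2 i j)
    (H := fun y => np.P i j * H y) (continuous_const.sub hf) (continuous_const.mul hH.continuous)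
    (fun a ha b hb hab => mul_le_mul_of_nonneg_left
      (hH.monotoneOn (hs.trans ha.1) (hs.trans hb.1) hab) (np.P_nonneg i j)) hst
    fun a b hsa hab _ => ?_
  have ha : 0 ≤ a := hs.trans hsa
  have hprofile : np.mu i j * F = π i * np.P i j := mu_mul_transitProfile_snd i j
  rw [integral_sub intervalIntegrable_const (hf.intervalIntegrable _ _),
    intervalIntegral.integral_const, smul_eq_mul]
  have hshortage := mul_le_mul_of_nonneg_left (hH.shortage_le a b ha hab) (np.P_nonneg i j)
  linear_combination hshortage - h.full_sub i j a b ha hab + (b - a) * c * hprofile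

lemma empty_shortfall_sub_le (h : IsFluidTrajectory np Q x D) (hQ : IsRouting Q) (hs : 0 ≤ s)
    (hst : s ≤ t) (hij : i ≠ j) :
    (shortfall np Q π c (x t)).1 i j - (shortfall np Q π c (x s)).1 i j ≤
      Q i j * dropoffRate np i (∫ y in s..t, shortfall np Q π c (x y))
        - np.mu i j * (∫ y in s..t, shortfall np Q π c (x y)).1 i j := by
  set W := (transitProfile np Q π).1 i j
  have he : Continuous fun y => (x y).1 i j := (emptyCoord i j).continuous.comp h.continuous
  have hdropoff : Continuous fun y => Q i j * dropoffRate np i (x y) :=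
    continuous_const.mul ((dropoffRate np i).continuous.comp h.continuous)
  set G : ℝ → ℝ := fun y => Q i j * dropoffRate np i (∫ z in (0 : ℝ)..y, shortfall np Q π c (x z))
    with hG
  have hG_sub : ∀ a b, G b - G a
      = Q i j * dropoffRate np i (∫ y in a..b, shortfall np Q π c (x y)) := fun a b => by
    rw [hG, ← mul_sub, ← map_sub, h.integral_shortfall_sub]
  rw [integral_fst_apply (h.continuous_shortfall_comp c), ← hG_sub]
  refine posPart_sub_le_of_sub_le (g := fun y => c * W - (x y).1 i j) (continuous_const.sub he)
    (continuous_const.mul <| (dropoffRate np i).continuous.comp <|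
      continuous_primitive (fun _ _ => (h.continuous_shortfall_comp c).intervalIntegrable _ _) 0)
    (fun a _ b _ hab => sub_nonneg.1 ?_) hst fun a b hsa hab _ => ?_
  · rw [hG_sub]
    exact mul_nonneg (hQ.1 i j) (dropoffRate_nonneg (h.integral_shortfall_nonneg c hab) i)
  have hprofile : np.mu i j * W = Q i j * dropoffRate np i (transitProfile np Q π) :=
    mu_mul_transitProfile_fst hij
  have hshort :
      ∫ y in a..b, (c * (np.mu i j * W) - Q i j * dropoffRate np i (x y)) ≤ G b - G a := by
    rw [hG_sub, ← h.integral_map_shortfall, ← intervalIntegral.integral_const_mul]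
    refine integral_mono_on hab ((continuous_const.sub hdropoff).intervalIntegrable _ _)
      ((continuous_const.mul (h.continuous_map_shortfall _ c)).intervalIntegrable _ _)
      fun y _ => ?_
    rw [hprofile]
    linear_combination mul_le_mul_of_nonneg_left
      (dropoffRate_transitProfile_sub_le (Q := Q) (π := π) c (x y) i) (hQ.1 i j)
  rw [integral_sub intervalIntegrable_const (hdropoff.intervalIntegrable _ _),
    intervalIntegral.integral_const, smul_eq_mul] at hshort
  rw [integral_sub intervalIntegrable_const (he.intervalIntegrable _ _),
    intervalIntegral.integral_const, smul_eq_mul]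
  linear_combination hshort - h.empty_sub i j hij a b (hs.trans hsa) hab

lemma deficit_sub_le (h : IsFluidTrajectory np Q x D) (hQ : IsRouting Q) {H : Fin r → ℝ → ℝ}
    (hH : ∀ i, IsShortageMajorant (D · i) (c * π i) (H i)) (hs : 0 ≤ s) (hst : s ≤ t) :
    deficit np Q π c (x t) - deficit np Q π c (x s) ≤ ∑ i, (H i t - H i s)
      - ∑ i, arrivalRate np Q i (∫ y in s..t, shortfall np Q π c (x y)) := by
  set S := ∫ y in s..t, shortfall np Q π c (x y)
  have hfull : ∑ i, ∑ j, ((shortfall np Q π c (x t)).2 i j - (shortfall np Q π c (x s)).2 i j)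
      ≤ ∑ i, (H i t - H i s) - ∑ i, dropoffRate np i S := calc
    _ ≤ ∑ i, ∑ j, (np.P i j * (H i t - H i s) - np.mu i j * S.2 i j) :=
      Finset.sum_le_sum fun i _ => Finset.sum_le_sum fun j _ =>
        h.full_shortfall_sub_le (hH i) hs hst j
    _ = _ := by
      simp only [Finset.sum_sub_distrib, ← Finset.sum_mul, np.P_rowsum, one_mul,
        sum_sum_mu_mul_full]
  have hempty : ∑ i, ∑ j, ((shortfall np Q π c (x t)).1 i j - (shortfall np Q π c (x s)).1 i j)
      ≤ ∑ i, dropoffRate np i S - ∑ i, arrivalRate np Q i S := calc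
    _ = ∑ i, ∑ j with j ≠ i,
        ((shortfall np Q π c (x t)).1 i j - (shortfall np Q π c (x s)).1 i j) := by
      refine Finset.sum_congr rfl fun i _ => ?_
      rw [← sum_ne_add_diag _ i, shortfall_fst_self (h.nonneg t), shortfall_fst_self (h.nonneg s),
        sub_self, add_zero]
    _ ≤ ∑ i, ∑ j with j ≠ i, (Q i j * dropoffRate np i S - np.mu i j * S.1 i j) :=
      Finset.sum_le_sum fun i _ => Finset.sum_le_sum fun j hj =>
        h.empty_shortfall_sub_le hQ hs hst (mem_filter.1 hj).2.symm
    _ = _ := sum_sum_empty_netFlow hQ S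
  simp only [deficit, Finset.sum_add_distrib]
  simp only [Finset.sum_sub_distrib] at hfull hempty ⊢
  linarith

lemma deficit_antitone (h : IsFluidTrajectory np Q x D) (hQ : IsRouting Q)
    (hπ : IsTrafficSolution np Q π) (hc : ∀ i, c * π i ≤ np.lam i) (hs : 0 ≤ s) (hst : s ≤ t) :
    deficit np Q π c (x t) ≤ deficit np Q π c (x s) := by
  have hle := h.deficit_sub_le hQ
    (fun i => h.isShortageMajorant_shortfall hQ hπ (hc i)) hs hst
  simp only [← map_sub, h.integral_shortfall_sub, sub_self, sub_nonpos] at hle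
  exact hle

lemma level_persists (h : IsFluidTrajectory np Q x D) (hQ : IsRouting Q)
    (hπ : IsTrafficSolution np Q π) (hc : ∀ i, c * π i ≤ np.lam i) (hs : 0 ≤ s) (hst : s ≤ t)
    (hlevel : c • transitProfile np Q π ≤ x s) : c • transitProfile np Q π ≤ x t :=
  deficit_eq_zero_iff.1 <| (deficit_nonneg c (x t)).antisymm' <|
    (h.deficit_antitone hQ hπ hc hs hst).trans_eq (deficit_eq_zero_iff.2 hlevel)

/- At the bottleneck `b` the shortage of departures is the idleness, which ties the deficit to the
idle cars at `b`. -/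
lemma integral_excess_le (h : IsFluidTrajectory np Q x D) (hQ : IsRouting Q)
    (hπ : IsTrafficSolution np Q π) (hle : ∀ i, π i ≤ np.lam i) (hb : π b = np.lam b)
    (hs : 0 ≤ s) (hst : s ≤ t) :
    ∫ y in s..t, (arrivalRate np Q b (x y) - π b + arrivalRate np Q b (shortfall np Q π 1 (x y)))
      ≤ ((x t).1 b b - deficit np Q π 1 (x t)) - ((x s).1 b b - deficit np Q π 1 (x s)) := by
  set S := ∫ y in s..t, shortfall np Q π 1 (x y)
  set R : Fin r → ℝ → ℝ := fun i y =>
    arrivalRate np Q i (∫ z in (0 : ℝ)..y, shortfall np Q π 1 (x z)) with hR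
  set H : Fin r → ℝ → ℝ := Function.update R b fun y => np.lam b * y - D y b with hH
  have hmajorant : ∀ i, IsShortageMajorant (D · i) (1 * π i) (H i) := fun i => by
    rcases eq_or_ne i b with rfl | hib
    · rw [hH, Function.update_self, one_mul, hb]
      exact h.isShortageMajorant_idleness i
    · rw [hH, Function.update_of_ne hib]
      exact h.isShortageMajorant_shortfall hQ hπ ((one_mul (π i)).trans_le (hle i))
  have hR_sub : ∀ i, R i t - R i s = arrivalRate np Q i S := fun i => by
    rw [hR, ← map_sub, h.integral_shortfall_sub]
  have hsum : ∑ i, (H i t - H i s) - ∑ i, arrivalRate np Q i S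
      = np.lam b * (t - s) - (D t b - D s b) - arrivalRate np Q b S := by
    rw [← Finset.sum_sub_distrib, Finset.sum_eq_single b (fun i _ hib => ?_) (by simp)]
    · rw [hH, Function.update_self]
      ring
    · rw [hH, Function.update_of_ne hib, hR_sub, sub_self]
  have hdeficit := (h.deficit_sub_le hQ hmajorant hs hst).trans_eq hsum
  have harrival := h.continuous_arrivalRate b
  have hexcess : Continuous fun y => arrivalRate np Q b (x y) - π b := harrival.sub continuous_const
  rw [integral_add (hexcess.intervalIntegrable _ _)
      ((h.continuous_map_shortfall _ 1).intervalIntegrable _ _),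
    integral_sub (harrival.intervalIntegrable _ _) intervalIntegrable_const,
    intervalIntegral.integral_const, smul_eq_mul, h.integral_map_shortfall, hb]
  linarith [h.idle_sub b s t hs hst]

end IsFluidTrajectory
end Deficit

/-! ### The attained level -/

section Level

variable {r : ℕ} {np : NetParams r} {Q : Mat r} {π : Fin r → ℝ} {x : ℝ → Mat r × Mat r}
  {D : ℝ → Fin r → ℝ} {a t w γ η θ A : ℝ} {b i j : Fin r}

namespace IsFluidTrajectory

lemma exists_abs_integral_le (h : IsFluidTrajectory np Q x D) (L : Mat r × Mat r →L[ℝ] ℝ) :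
    ∃ K, ∀ s t, s ≤ t → |∫ y in s..t, L (x y)| ≤ K * (t - s) := by
  obtain ⟨K, hK⟩ := isCompact_setOf_memT.exists_bound_of_continuousOn L.continuous.continuousOn
  refine ⟨K, fun s t hst => ?_⟩
  have hbound := norm_integral_le_of_norm_le_const (a := s) (b := t)
    fun y _ => hK (x y) (h.memT y)
  rwa [Real.norm_eq_abs, abs_of_nonneg (sub_nonneg.2 hst)] at hbound

lemma uniformContinuousOn_of_sub_eq (h : IsFluidTrajectory np Q x D) (hQ : IsRouting Q)
    (α : ℝ) (i : Fin r) (L : Mat r × Mat r →L[ℝ] ℝ) {g : ℝ → ℝ}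
    (hg : ∀ s t, 0 ≤ s → s ≤ t → g t - g s = α * (D t i - D s i) + ∫ y in s..t, L (x y)) :
    UniformContinuousOn g (Set.Ici 0) := by
  obtain ⟨K, hK⟩ := h.exists_abs_integral_le L
  have hlip : ∀ s t, 0 ≤ s → s ≤ t → |g t - g s| ≤ (|α| * np.lam i + K) * (t - s) :=
    fun s t hs hst => calc
      |g t - g s| ≤ |α * (D t i - D s i)| + |∫ y in s..t, L (x y)| :=
        hg s t hs hst ▸ abs_add_le _ _
      _ ≤ |α| * (np.lam i * (t - s)) + K * (t - s) := by
        rw [abs_mul, abs_of_nonneg (sub_nonneg.2 (h.departures_mono hQ hs hst))]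
        exact add_le_add (mul_le_mul_of_nonneg_left (h.departures_le i s t hs hst) (abs_nonneg α))
          (hK s t hst)
      _ = _ := by ring
  refine (LipschitzOnWith.of_dist_le_mul (K := (|α| * np.lam i + K).toNNReal)
    fun s hs t ht => ?_).uniformContinuousOn
  wlog hst : s ≤ t generalizing s t
  · rw [dist_comm, dist_comm s]
    exact this t ht s hs (le_of_not_ge hst)
  rw [dist_comm, dist_comm s, Real.dist_eq, Real.dist_eq, abs_of_nonneg (sub_nonneg.2 hst)]
  exact (hlip s t hs hst).trans
    (mul_le_mul_of_nonneg_right (Real.le_coe_toNNReal _) (sub_nonneg.2 hst))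

lemma uniformContinuousOn (h : IsFluidTrajectory np Q x D) (hQ : IsRouting Q) :
    UniformContinuousOn x (Set.Ici 0) := by
  have hint : ∀ (L : Mat r × Mat r →L[ℝ] ℝ) s t,
      IntervalIntegrable (fun y => L (x y)) volume s t :=
    fun L s t => (L.continuous.comp h.continuous).intervalIntegrable s t
  have hfull : ∀ i j, UniformContinuousOn (fun t => (x t).2 i j) (Set.Ici 0) := fun i j =>
    h.uniformContinuousOn_of_sub_eq hQ (np.P i j) i (-np.mu i j • fullCoord i j)
      fun s t hs hst => by
        rw [h.full_sub i j s t hs hst, sub_eq_add_neg, ← neg_mul,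
          ← intervalIntegral.integral_const_mul]
        rfl
  have hidle : ∀ i, UniformContinuousOn (fun t => (x t).1 i i) (Set.Ici 0) := fun i =>
    h.uniformContinuousOn_of_sub_eq hQ (-1) i (arrivalRate np Q i) fun s t hs hst => by
      rw [h.idle_sub i s t hs hst]
      ring
  have hempty : ∀ i j, UniformContinuousOn (fun t => (x t).1 i j) (Set.Ici 0) := fun i j => by
    rcases eq_or_ne i j with rfl | hij
    · exact hidle i
    refine h.uniformContinuousOn_of_sub_eq hQ 0 i
      (Q i j • dropoffRate np i - np.mu i j • emptyCoord i j) fun s t hs hst => ?_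
    rw [h.empty_sub i j hij s t hs hst, zero_mul, zero_add,
      ← intervalIntegral.integral_const_mul]
    exact (integral_sub (hint (Q i j • dropoffRate np i) s t)
      (hint (np.mu i j • emptyCoord i j) s t)).symm
  simp only [uniformContinuousOn_iff_restrict] at hfull hempty ⊢
  exact .prodMk (uniformContinuous_pi.2 fun i => uniformContinuous_pi.2 fun j => hempty i j)
    (uniformContinuous_pi.2 fun i => uniformContinuous_pi.2 fun j => hfull i j)

lemma uniformContinuousOn_comp (h : IsFluidTrajectory np Q x D) (hQ : IsRouting Q)
    {Φ : Mat r × Mat r → ℝ} (hΦ : Continuous Φ) :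
    UniformContinuousOn (fun t => Φ (x t)) (Set.Ici 0) :=
  (isCompact_setOf_memT.uniformContinuousOn_of_continuous hΦ.continuousOn).comp
    (h.uniformContinuousOn hQ) fun t _ => h.memT t

/- Barbalat's lemma applied to the excess bounded in `integral_excess_le`. -/
lemma eventually_arrivalRate_lt (h : IsFluidTrajectory np Q x D) (hQ : IsRouting Q)
    (hπ : IsTrafficSolution np Q π) (hle : ∀ i, π i ≤ np.lam i) (hb : π b = np.lam b) {l : ℝ}
    (hl : π b < l) : ∀ᶠ t in atTop, arrivalRate np Q b (x t) < l := by
  set Φ : Mat r × Mat r → ℝ := fun p =>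
    arrivalRate np Q b p - π b + arrivalRate np Q b (shortfall np Q π 1 p)
  have hΦ : Continuous Φ := ((arrivalRate np Q b).continuous.sub continuous_const).add
    ((arrivalRate np Q b).continuous.comp (continuous_shortfall 1))
  have hΦ_nonneg : ∀ t, 0 ≤ t → 0 ≤ Φ (x t) := fun t _ => by
    linarith [sub_arrivalRate_shortfall_le hQ hπ 1 (x t) b]
  have hΦ_int : ∀ t, 0 ≤ t → ∫ y in (0 : ℝ)..t, Φ (x y) ≤ 1 + deficit np Q π 1 (x 0) :=
    fun t ht => by
      linarith [h.integral_excess_le hQ hπ hle hb le_rfl ht, ((h.memT t).1 b b).2,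
        ((h.memT 0).1 b b).1, deficit_nonneg (np := np) (Q := Q) (π := π) 1 (x t)]
  have hlim := tendsto_zero_of_integral_le (hΦ.comp h.continuous) hΦ_nonneg
    (h.uniformContinuousOn_comp hQ hΦ) hΦ_int
  filter_upwards [hlim.eventually_lt_const (sub_pos.2 hl)] with t ht
  have ht : Φ (x t) < l - π b := ht
  have hshort : 0 ≤ shortfall np Q π 1 (x t) := shortfall_nonneg 1 (x t)
  linarith [arrivalRate_nonneg (np := np) hQ hshort b]

lemma full_gain (h : IsFluidTrajectory np Q x D) (hπ : IsTrafficSolution np Q π)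
    (hγ : γ ≤ 1 - Real.exp (-np.mu i j * w)) (hw : 0 ≤ w) (hη : 0 ≤ η) (hA : 0 ≤ A)
    (ht : A + w ≤ t) (hlevel : a • transitProfile np Q π ≤ x A)
    (hcap : (a + η) * π i ≤ np.lam i)
    (hinflow : ∀ y, A ≤ y → y ≤ t → (a + η) * π i ≤ arrivalRate np Q i (x y)) :
    (a + η * γ) * (transitProfile np Q π).2 i j ≤ (x t).2 i j := by
  set F := (transitProfile np Q π).2 i j
  have hF : 0 ≤ F :=
    div_nonneg (mul_nonneg (hπ.pos i).le (np.P_nonneg i j)) (np.mu_pos i j).le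
  have hprofile : np.mu i j * F = π i * np.P i j := mu_mul_transitProfile_snd i j
  have hf : Continuous fun v => (x v).2 i j := (fullCoord i j).continuous.comp h.continuous
  refine (mul_le_mul_of_nonneg_right (by gcongr) hF).trans <|
    relaxation_gain (np.mu_pos i j) hf hF hη (hlevel.2 i j) hw ht fun y z hAy hyz hzt => ?_
  have hdep := h.departures_sub_ge (ρ := fun _ => 0) continuous_const (fun _ => le_rfl)
    (hA.trans hAy) hyz (fun v hyv hvz => by
      simpa using hinflow v (hAy.trans hyv) (hvz.trans hzt)) hcap
  rw [intervalIntegral.integral_zero, sub_zero] at hdep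
  have hdep' := mul_le_mul_of_nonneg_left hdep (np.P_nonneg i j)
  have hfull := h.full_sub i j y z (hA.trans hAy) hyz
  linear_combination hdep' - hfull + (a + η) * (z - y) * hprofile

lemma empty_gain (h : IsFluidTrajectory np Q x D) (hQ : IsRouting Q)
    (hπ : IsTrafficSolution np Q π) (hij : i ≠ j)
    (hγ : γ ≤ 1 - Real.exp (-np.mu i j * w)) (hw : 0 ≤ w) (hη : 0 ≤ η) (hA : 0 ≤ A)
    (ht : A + w ≤ t) (hlevel : a • transitProfile np Q π ≤ x A)
    (hfull : ∀ y k, A ≤ y → y ≤ t → (a + η) * (transitProfile np Q π).2 k i ≤ (x y).2 k i) :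
    (a + η * γ) * (transitProfile np Q π).1 i j ≤ (x t).1 i j := by
  set W := (transitProfile np Q π).1 i j
  have hW : 0 ≤ W := (transitProfile_nonneg hQ hπ).1 i j
  have hprofile : np.mu i j * W = Q i j * dropoffRate np i (transitProfile np Q π) :=
    mu_mul_transitProfile_fst hij
  have he : Continuous fun v => (x v).1 i j := (emptyCoord i j).continuous.comp h.continuous
  have hd : Continuous fun v => Q i j * dropoffRate np i (x v) :=
    continuous_const.mul ((dropoffRate np i).continuous.comp h.continuous)
  refine (mul_le_mul_of_nonneg_right (by gcongr) hW).trans <|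
    relaxation_gain (np.mu_pos i j) he hW hη (hlevel.1 i j) hw ht fun y z hAy hyz hzt => ?_
  have hdropoff : ∀ v, y ≤ v → v ≤ z →
      (a + η) * (np.mu i j * W) ≤ Q i j * dropoffRate np i (x v) := fun v hyv hvz => by
    rw [hprofile, mul_left_comm, dropoffRate_apply, dropoffRate_apply, Finset.mul_sum]
    refine mul_le_mul_of_nonneg_left (Finset.sum_le_sum fun k _ => ?_) (hQ.1 i j)
    rw [mul_left_comm]
    exact mul_le_mul_of_nonneg_left (hfull v k (hAy.trans hyv) (hvz.trans hzt)) (np.mu_pos k i).le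
  have hint := integral_mono_on hyz intervalIntegrable_const
    (hd.intervalIntegrable (μ := volume) y z) fun v hv => hdropoff v hv.1 hv.2
  rw [intervalIntegral.integral_const, smul_eq_mul] at hint
  linarith [h.empty_sub i j hij y z (hA.trans hAy) hyz]

/- An excess at station `b` reaches, after a time `w` each, first the full transits out of `b`, then
the full transits out of every station, and finally the empty transits. -/
lemma level_gain (h : IsFluidTrajectory np Q x D) (hQ : IsRouting Q)
    (hπ : IsTrafficSolution np Q π) (hle : ∀ i, π i ≤ np.lam i)
    (hw : 0 ≤ w) (hγ0 : 0 ≤ γ) (hγ : ∀ i j, γ ≤ 1 - Real.exp (-np.mu i j * w))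
    (hθ0 : 0 ≤ θ) (hθ1 : θ ≤ 1) (hθ : ∀ l, θ * π l ≤ Q l l * (π b * np.P b l))
    (hη : 0 ≤ η) (hcap : a + η ≤ 1) (ht : 0 ≤ t) (hlevel : a • transitProfile np Q π ≤ x t)
    (hinflow : ∀ y, t ≤ y → y ≤ t + 3 * w → (a + η) * π b ≤ arrivalRate np Q b (x y)) :
    (a + η * (γ * θ * γ * γ)) • transitProfile np Q π ≤ x (t + 3 * w) := by
  have hγ1 : γ ≤ 1 := (hγ b b).trans (sub_le_self 1 (Real.exp_pos _).le)
  have hprofile := transitProfile_nonneg hQ hπ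
  have hcap_le : ∀ ζ ≤ 1, ∀ i, ζ * π i ≤ np.lam i := fun ζ hζ i =>
    (mul_le_of_le_one_left (hπ.pos i).le hζ).trans (hle i)
  have hpersist : ∀ y, t ≤ y → a • transitProfile np Q π ≤ x y := fun y hy =>
    h.level_persists hQ hπ (hcap_le a (by linarith)) ht hy hlevel
  have hfull_b : ∀ y l, t + w ≤ y → y ≤ t + 3 * w →
      (a + η * γ) * (transitProfile np Q π).2 b l ≤ (x y).2 b l := fun y l hy hy' =>
    h.full_gain hπ (hγ b l) hw hη ht hy hlevel (hcap_le _ hcap b)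
      fun z hz hz' => hinflow z hz (hz'.trans hy')
  have hinflow_all : ∀ y l, t + w ≤ y → y ≤ t + 3 * w →
      (a + η * γ * θ) * π l ≤ arrivalRate np Q l (x y) := fun y l hy hy' =>
    mul_le_arrivalRate_of_full_gain hQ hπ (mul_nonneg hη hγ0) (hθ l) (hpersist y (by linarith))
      (hfull_b y l hy hy')
  have hηγθ : η * γ * θ ≤ η :=
    (mul_le_of_le_one_right (by positivity) hθ1).trans (mul_le_of_le_one_right hη hγ1)
  have hfull : ∀ y k l, t + w + w ≤ y → y ≤ t + 3 * w →
      (a + η * γ * θ * γ) * (transitProfile np Q π).2 k l ≤ (x y).2 k l := fun y k l hy hy' =>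
    h.full_gain hπ (hγ k l) hw (by positivity) (by positivity) hy (hpersist _ (by linarith))
      (hcap_le _ (by linarith) k) fun z hz hz' => hinflow_all z k hz (hz'.trans hy')
  rw [show η * (γ * θ * γ * γ) = η * γ * θ * γ * γ by ring]
  refine ⟨fun i j => ?_, fun i j => ?_⟩
  · rcases eq_or_ne i j with rfl | hij
    · simpa [transitProfile] using (h.nonneg _).1 i i
    · exact h.empty_gain hQ hπ hij (hγ i j) hw (by positivity) (by positivity) (by linarith)
        (hpersist _ (by linarith)) fun y k hy hy' => hfull y k i hy hy'
  · exact (mul_le_mul_of_nonneg_right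
      (add_le_add_right (mul_le_of_le_one_right (by positivity) hγ1) a) (hprofile.2 i j)).trans
      (hfull _ i j (by linarith) le_rfl)

end IsFluidTrajectory
end Level

/-! ### The limit level -/

section Limit

variable {r : ℕ} {np : NetParams r} {Q : Mat r} {π : Fin r → ℝ} {x : ℝ → Mat r × Mat r}
  {D : ℝ → Fin r → ℝ} {c w : ℝ} {b i j k : Fin r}

lemma exists_uniform_relaxation_gain (np : NetParams r) [Nonempty (Fin r)] (hw : 0 < w) :
    ∃ γ > 0, γ ≤ 1 ∧ ∀ i j, γ ≤ 1 - Real.exp (-np.mu i j * w) := by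
  obtain ⟨γ, hγ0, hγ, -⟩ := exists_mul_le_and_mul_eq
    (n := Fin r × Fin r) (v := 1) (l := fun q => 1 - Real.exp (-np.mu q.1 q.2 * w))
    (fun _ => one_pos) fun q => sub_pos.2 <| Real.exp_lt_one_iff.2 <|
      mul_neg_of_neg_of_pos (neg_neg_of_pos (np.mu_pos q.1 q.2)) hw
  simp only [Pi.one_apply, mul_one] at hγ
  obtain ⟨b⟩ := ‹Nonempty (Fin r)›
  exact ⟨γ, hγ0, (hγ (b, b)).trans (sub_le_self 1 (Real.exp_pos _).le), fun i j => hγ (i, j)⟩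

lemma exists_uniform_spread (hQ : IsRouting Q) (hπ : IsTrafficSolution np Q π)
    (hP : ∀ i j, 0 < np.P i j) (hQd : ∀ i, 0 < Q i i) (b : Fin r) :
    ∃ θ > 0, θ ≤ 1 ∧ ∀ l, θ * π l ≤ Q l l * (π b * np.P b l) := by
  have : Nonempty (Fin r) := ⟨b⟩
  obtain ⟨θ, hθ0, hθ, -⟩ := exists_mul_le_and_mul_eq hπ.pos
    (l := fun l => Q l l * (π b * np.P b l)) fun l => mul_pos (hQd l) (mul_pos (hπ.pos b) (hP b l))
  have hQ1 : Q b b ≤ 1 := hQ.2 b ▸ single_le_sum (fun j _ => hQ.1 b j) (mem_univ b)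
  have hP1 : np.P b b ≤ 1 := np.P_rowsum b ▸ single_le_sum (fun j _ => np.P_nonneg b j) (mem_univ b)
  refine ⟨θ, hθ0, le_of_mul_le_mul_right ?_ (hπ.pos b), hθ⟩
  calc θ * π b ≤ Q b b * (π b * np.P b b) := hθ b
    _ ≤ 1 * (π b * 1) := mul_le_mul hQ1 (mul_le_mul_of_nonneg_left hP1 (hπ.pos b).le)
      (mul_pos (hπ.pos b) (hP b b)).le zero_le_one
    _ = 1 * π b := by rw [mul_one]

/-- The level `c` is attained by the trajectory `x` if at some time the cars in transit are at least
`c` times the transit profile. Levels above `1` are excluded, since they need not persist. -/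
def IsAttainedLevel (np : NetParams r) (Q : Mat r) (π : Fin r → ℝ) (x : ℝ → Mat r × Mat r)
    (c : ℝ) : Prop :=
  c ≤ 1 ∧ ∃ t, 0 ≤ t ∧ c • transitProfile np Q π ≤ x t

namespace IsFluidTrajectory

lemma isAttainedLevel_zero (h : IsFluidTrajectory np Q x D) : IsAttainedLevel np Q π x 0 :=
  ⟨zero_le_one, 0, le_rfl, (zero_smul ℝ (transitProfile np Q π)).trans_le (h.nonneg 0)⟩

lemma eventually_level (h : IsFluidTrajectory np Q x D) (hQ : IsRouting Q)
    (hπ : IsTrafficSolution np Q π) (hle : ∀ i, π i ≤ np.lam i)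
    (hc : IsLUB {a | IsAttainedLevel np Q π x a} c) {a : ℝ} (hac : a < c) :
    ∀ᶠ t in atTop, a • transitProfile np Q π ≤ x t := by
  obtain ⟨a', ⟨ha'1, s, hs, hlevel⟩, ha, -⟩ := hc.exists_between hac
  filter_upwards [eventually_ge_atTop s] with t hst
  exact level_anti hQ hπ ha.le <| h.level_persists hQ hπ
    (fun i => (mul_le_of_le_one_left (hπ.pos i).le ha'1).trans (hle i)) hs hst hlevel

/- By uniform continuity an excess at `b` lasts for a time `3 * w` that does not depend on when it
occurs. If it occurs late, it raises the level from just below `c` to above `c`. -/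
lemma eventually_arrivalRate_lt_of_isLUB (h : IsFluidTrajectory np Q x D) (hQ : IsRouting Q)
    (hP : ∀ i j, 0 < np.P i j) (hQd : ∀ i, 0 < Q i i) (hπ : IsTrafficSolution np Q π)
    (hle : ∀ i, π i ≤ np.lam i) (hc : IsLUB {a | IsAttainedLevel np Q π x a} c) (hc1 : c < 1)
    {l : ℝ} (hl : c * π b < l) : ∀ᶠ t in atTop, arrivalRate np Q b (x t) < l := by
  obtain ⟨ζ, hcζ, hζ⟩ := exists_between (lt_min hc1 ((lt_div_iff₀ (hπ.pos b)).2 hl))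
  obtain ⟨hζ1, hζl⟩ := lt_min_iff.1 hζ
  have hζl : ζ * π b < l := (lt_div_iff₀ (hπ.pos b)).1 hζl
  obtain ⟨δ, hδ, hunif⟩ := Metric.uniformContinuousOn_iff.1
    (h.uniformContinuousOn_comp hQ (arrivalRate np Q b).continuous) _ (sub_pos.2 hζl)
  have hw : 0 < δ / 4 := by positivity
  have : Nonempty (Fin r) := ⟨b⟩
  obtain ⟨γ, hγ0, hγ1, hγ⟩ := exists_uniform_relaxation_gain np hw
  obtain ⟨θ, hθ0, hθ1, hθ⟩ := exists_uniform_spread hQ hπ hP hQd b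
  set κ := γ * θ * γ * γ
  have hκ0 : 0 < κ := by positivity
  have hκ1 : κ ≤ 1 := mul_le_one₀ (mul_le_one₀ (mul_le_one₀ hγ1 hθ0.le hθ1) hγ0.le hγ1) hγ0.le hγ1
  have hlow : c - κ * (ζ - c) / 2 < c := by linarith [mul_pos hκ0 (sub_pos.2 hcζ)]
  obtain ⟨a, ha, hac⟩ := exists_between hlow
  filter_upwards [h.eventually_level hQ hπ hle hc hac, eventually_ge_atTop 0] with t hlevel ht
  by_contra! hlt
  have hinflow : ∀ y, t ≤ y → y ≤ t + 3 * (δ / 4) → ζ * π b ≤ arrivalRate np Q b (x y) :=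
    fun y hty hyt => by
      have hdist := hunif t ht y (ht.trans hty) (by
        rw [dist_comm, Real.dist_eq, abs_of_nonneg (sub_nonneg.2 hty)]
        linarith)
      linarith [(abs_lt.1 hdist).2]
  have hgain := h.level_gain (η := ζ - a) hQ hπ hle hw.le hγ0.le hγ hθ0.le hθ1 hθ (by linarith)
    (by linarith) ht hlevel (by simpa only [add_sub_cancel] using hinflow)
  have hgain_le : (ζ - a) * κ ≤ ζ - a := mul_le_of_le_one_right (by linarith) hκ1
  have hmem : IsAttainedLevel np Q π x (a + (ζ - a) * κ) :=
    ⟨by linarith, _, by positivity, hgain⟩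
  linarith [hc.1 hmem, mul_le_mul_of_nonneg_right (sub_le_sub_left hac.le ζ) hκ0.le,
    mul_pos hκ0 (sub_pos.2 hcζ)]

lemma exists_limit_level (h : IsFluidTrajectory np Q x D) (hQ : IsRouting Q)
    (hP : ∀ i j, 0 < np.P i j) (hQd : ∀ i, 0 < Q i i) (hπ : IsTrafficSolution np Q π)
    (hle : ∀ i, π i ≤ np.lam i) (hb : π b = np.lam b) :
    ∃ c, 0 ≤ c ∧ c ≤ 1 ∧ (∀ a < c, ∀ᶠ t in atTop, a • transitProfile np Q π ≤ x t) ∧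
      Tendsto (fun t => arrivalRate np Q b (x t)) atTop (𝓝 (c * π b)) := by
  obtain ⟨c, hc⟩ := Real.exists_isLUB (s := {a | IsAttainedLevel np Q π x a})
    ⟨0, h.isAttainedLevel_zero⟩ ⟨1, fun _ ha => ha.1⟩
  have hc1 : c ≤ 1 := hc.2 fun _ ha => ha.1
  refine ⟨c, hc.1 h.isAttainedLevel_zero, hc1, fun a ha => h.eventually_level hQ hπ hle hc ha,
    tendsto_order.2 ⟨fun l hl => ?_, fun l hl => ?_⟩⟩
  · obtain ⟨a, hla, hac⟩ := exists_between ((div_lt_iff₀ (hπ.pos b)).2 hl)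
    filter_upwards [h.eventually_level hQ hπ hle hc hac] with t ht
    exact ((div_lt_iff₀ (hπ.pos b)).1 hla).trans_le (mul_le_arrivalRate hQ hπ ht b)
  · rcases hc1.lt_or_eq with hc_lt | rfl
    · exact h.eventually_arrivalRate_lt_of_isLUB hQ hP hQd hπ hle hc hc_lt hl
    · exact h.eventually_arrivalRate_lt hQ hπ hle hb (by rwa [one_mul] at hl)

lemma tendsto_full_bottleneck (hQ : IsRouting Q) (hP : ∀ i j, 0 < np.P i j)
    (hQd : ∀ i, 0 < Q i i) (hπ : IsTrafficSolution np Q π)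
    (hlevel : ∀ a < c, ∀ᶠ t in atTop, a • transitProfile np Q π ≤ x t)
    (hb : Tendsto (fun t => arrivalRate np Q b (x t)) atTop (𝓝 (c * π b))) (k : Fin r) :
    Tendsto (fun t => (x t).2 k b) atTop (𝓝 (c * (transitProfile np Q π).2 k b)) := by
  set F := (transitProfile np Q π).2 k b with hF_def
  have hF : 0 < F := transitProfile_snd_pos hπ hP k b
  have hQμ : 0 < Q b b * np.mu k b := mul_pos (hQd b) (np.mu_pos k b)
  refine tendsto_order.2 ⟨fun l hl => ?_, fun l hl => ?_⟩
  · obtain ⟨a, hla, hac⟩ := exists_between ((div_lt_iff₀ hF).2 hl)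
    filter_upwards [hlevel a hac] with t ht
    exact ((div_lt_iff₀ hF).1 hla).trans_le (ht.2 k b)
  · set δ := Q b b * np.mu k b * (l - c * F) / 2 with hδ
    have hδ0 : 0 < δ := half_pos (mul_pos hQμ (sub_pos.2 hl))
    filter_upwards [hlevel (c - δ / π b) (sub_lt_self c (div_pos hδ0 (hπ.pos b))),
      hb.eventually_lt_const (lt_add_of_pos_right _ hδ0)] with t ht hbt
    have hexcess := mul_add_excess_le_arrivalRate hQ hπ ht k b
    rw [sub_mul, div_mul_cancel₀ _ (hπ.pos b).ne', ← hF_def, ← mul_assoc] at hexcess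
    have hlt : (x t).2 k b - (c - δ / π b) * F < l - c * F :=
      lt_of_mul_lt_mul_left (by linarith) hQμ.le
    linarith [mul_pos (div_pos hδ0 (hπ.pos b)) hF]

/- The departures from `i` enter the cars travelling to `j` and to `k` in the ratio `P i j : P i k`,
so they cancel in the combination `P i k * f i j - P i j * f i k`, which therefore relaxes. -/
lemma tendsto_full (h : IsFluidTrajectory np Q x D) (hP : ∀ i j, 0 < np.P i j)
    (hk : Tendsto (fun t => (x t).2 i k) atTop (𝓝 (c * (transitProfile np Q π).2 i k)))
    (j : Fin r) :
    Tendsto (fun t => (x t).2 i j) atTop (𝓝 (c * (transitProfile np Q π).2 i j)) := by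
  have hf : ∀ l, Continuous fun t => (x t).2 i l :=
    fun l => (fullCoord i l).continuous.comp h.continuous
  have hint : ∀ l s t, IntervalIntegrable (fun y => (x y).2 i l) volume s t :=
    fun l s t => (hf l).intervalIntegrable s t
  have hdiff := tendsto_of_relaxation
    (g := fun t => np.P i k * (x t).2 i j - np.P i j * (x t).2 i k)
    (φ := fun t => np.P i j * (np.mu i k - np.mu i j) * (x t).2 i k) (np.mu_pos i j)
    (((hf j).const_mul _).sub ((hf k).const_mul _)) ((hf k).const_mul _)
    (fun s t hs hst => by
      rw [integral_sub ((hint j s t).const_mul _) ((hint k s t).const_mul _)]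
      simp only [intervalIntegral.integral_const_mul]
      linear_combination np.P i k * h.full_sub i j s t hs hst
        - np.P i j * h.full_sub i k s t hs hst)
    (hk.const_mul _)
  convert (hdiff.add (hk.const_mul (np.P i j))).const_mul (np.P i k)⁻¹ using 2
  · field [(hP i k).ne']
  · have hμ : np.mu i j ≠ 0 := (np.mu_pos i j).ne'
    have hPk : np.P i k ≠ 0 := (hP i k).ne'
    field_simp
    linear_combination c * np.P i k * mu_mul_transitProfile_snd (np := np) (Q := Q) (π := π) i j
      - c * np.P i j * mu_mul_transitProfile_snd (np := np) (Q := Q) (π := π) i k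

lemma tendsto_empty (h : IsFluidTrajectory np Q x D)
    (hfull : ∀ i j, Tendsto (fun t => (x t).2 i j) atTop (𝓝 (c * (transitProfile np Q π).2 i j)))
    (hij : i ≠ j) :
    Tendsto (fun t => (x t).1 i j) atTop (𝓝 (c * (transitProfile np Q π).1 i j)) := by
  have hdropoff : Tendsto (fun t => Q i j * dropoffRate np i (x t)) atTop
      (𝓝 (np.mu i j * (c * (transitProfile np Q π).1 i j))) := by
    rw [mul_left_comm, mu_mul_transitProfile_fst hij, mul_left_comm]
    simp only [dropoffRate_apply, Finset.mul_sum, mul_left_comm c]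
    exact tendsto_finsetSum _ fun k _ => ((hfull k i).const_mul _).const_mul _
  have hlim := tendsto_of_relaxation (np.mu_pos i j)
    ((emptyCoord i j).continuous.comp h.continuous)
    (continuous_const.mul ((dropoffRate np i).continuous.comp h.continuous))
    (h.empty_sub i j hij) hdropoff
  rwa [mul_div_cancel_left₀ _ (np.mu_pos i j).ne'] at hlim

lemma tendsto_departures (h : IsFluidTrajectory np Q x D) (hP : ∀ i j, 0 < np.P i j)
    (hfull : Tendsto (fun t => (x t).2 i j) atTop (𝓝 (c * (transitProfile np Q π).2 i j)))
    (hw : 0 < w) : Tendsto (fun t => D (t + w) i - D t i) atTop (𝓝 (c * π i * w)) := by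
  have hf : Continuous fun t => (x t).2 i j := (fullCoord i j).continuous.comp h.continuous
  have hshift := hfull.comp (tendsto_atTop_add_const_right _ w tendsto_id)
  have hlim := ((hshift.sub hfull).add
    ((tendsto_integral_window hf hfull hw).const_mul (np.mu i j))).const_mul (np.P i j)⁻¹
  have hvalue : c * π i * w = (np.P i j)⁻¹ * (c * (transitProfile np Q π).2 i j
      - c * (transitProfile np Q π).2 i j
        + np.mu i j * (c * (transitProfile np Q π).2 i j * w)) := by
    rw [sub_self, zero_add, eq_inv_mul_iff_mul_eq₀ (hP i j).ne']
    linear_combination -c * w * mu_mul_transitProfile_snd (np := np) (Q := Q) (π := π) i j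
  rw [hvalue]
  refine hlim.congr' ?_
  filter_upwards [eventually_ge_atTop 0] with t ht
  have hsub := h.full_sub i j t (t + w) ht (by linarith)
  rw [Function.comp_apply, id, hsub, sub_add_cancel, inv_mul_cancel_left₀ (hP i j).ne']

/- While station `i` is nonempty it serves at rate `λ i`, but in the long run only at rate
`c * π i`. -/
lemma tendsto_idle (h : IsFluidTrajectory np Q x D) (hQ : IsRouting Q)
    (hP : ∀ i j, 0 < np.P i j)
    (hfull : ∀ i j, Tendsto (fun t => (x t).2 i j) atTop (𝓝 (c * (transitProfile np Q π).2 i j)))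
    (hi : c * π i < np.lam i) : Tendsto (fun t => (x t).1 i i) atTop (𝓝 0) := by
  refine tendsto_order.2 ⟨fun l hl => .of_forall fun t => hl.trans_le ((h.nonneg t).1 i i),
    fun ε hε => ?_⟩
  have hw : 0 < ε / (2 * np.lam i) := div_pos hε (mul_pos two_pos (np.lam_pos i))
  set w := ε / (2 * np.lam i) with hw_def
  have hlw : np.lam i * w = ε / 2 := by
    rw [hw_def]
    field [(np.lam_pos i).ne']
  filter_upwards [(h.tendsto_departures hP (hfull i i) hw).eventually_lt_const
    (mul_lt_mul_of_pos_right hi hw), eventually_ge_atTop 0] with t hdep ht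
  by_contra! hε_le
  refine hdep.ne (((h.departures_eq i t (t + w) ht (by linarith)) fun y hty hyt => ?_).trans
    (by rw [add_sub_cancel_left]))
  have harrivals : 0 ≤ ∫ z in t..y, arrivalRate np Q i (x z) :=
    integral_nonneg hty.le fun z _ => arrivalRate_nonneg hQ (h.nonneg z) i
  have hserved : np.lam i * (y - t) ≤ np.lam i * w :=
    mul_le_mul_of_nonneg_left (by linarith) (np.lam_pos i).le
  linarith [h.idle_sub i t y ht hty.le, h.departures_le i t y ht hty.le]

end IsFluidTrajectory

/-- The states with the transit part of the equilibrium at level `c`, and no idle cars at the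
stations that are not saturated at that level. -/
structure IsEquilibriumAtLevel (np : NetParams r) (Q : Mat r) (π : Fin r → ℝ) (c : ℝ)
    (p : Mat r × Mat r) : Prop where
  memT : MemT p.1 p.2
  full : ∀ i j, p.2 i j = c * (transitProfile np Q π).2 i j
  empty : ∀ i j, i ≠ j → p.1 i j = c * (transitProfile np Q π).1 i j
  idle : ∀ i, c * π i < np.lam i → p.1 i i = 0

lemma IsEquilibriumAtLevel.dropoffRate_eq {p : Mat r × Mat r}
    (hp : IsEquilibriumAtLevel np Q π c p) (i : Fin r) :
    dropoffRate np i p = c * dropoffRate np i (transitProfile np Q π) := by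
  simp only [dropoffRate_apply, hp.full, Finset.mul_sum, mul_left_comm c]

lemma IsEquilibriumAtLevel.arrivalRate_eq {p : Mat r × Mat r} (hπ : IsTrafficSolution np Q π)
    (hp : IsEquilibriumAtLevel np Q π c p) (i : Fin r) : arrivalRate np Q i p = c * π i := by
  rw [← arrivalRate_transitProfile hπ i, arrivalRate_apply, arrivalRate_apply, hp.dropoffRate_eq,
    mul_add, Finset.mul_sum, mul_left_comm c]
  refine congrArg (· + _) (Finset.sum_congr rfl fun k hk => ?_)
  rw [hp.empty k i (mem_filter.1 hk).2, mul_left_comm]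

lemma IsEquilibriumAtLevel.mem_eqSet {p : Mat r × Mat r} (hp : IsEquilibriumAtLevel np Q π c p)
    (hπ : IsTrafficSolution np Q π) (hc0 : 0 ≤ c) (hle : ∀ i, c * π i ≤ np.lam i) :
    p ∈ eqSet np Q := by
  have hlam : ∀ i, np.lam i * (c * π i / np.lam i) = c * π i := fun i =>
    mul_div_cancel₀ _ (np.lam_pos i).ne'
  refine ⟨hp.memT, fun i => c * π i / np.lam i, fun i =>
    ⟨div_nonneg (mul_nonneg hc0 (hπ.pos i).le) (np.lam_pos i).le,
      (div_le_one (np.lam_pos i)).2 (hle i)⟩, fun i j => ?_, fun i j hij => ?_, fun i => ?_,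
    fun i => ?_⟩
  · rw [hp.full, mul_right_comm, hlam, mul_left_comm, mu_mul_transitProfile_snd, mul_assoc]
  · rw [hp.empty i j hij, ← dropoffRate_apply, hp.dropoffRate_eq, mul_left_comm,
      mu_mul_transitProfile_fst hij, mul_left_comm]
  · rw [hlam, ← hp.arrivalRate_eq hπ, arrivalRate_apply, dropoffRate_apply]
  · rcases (hle i).lt_or_eq with hlt | heq
    · rw [hp.idle i hlt, mul_zero]
    · beta_reduce
      rw [heq, div_self (np.lam_pos i).ne', sub_self, zero_mul]

namespace IsFluidTrajectory

lemma isEquilibriumAtLevel_of_mapClusterPt (h : IsFluidTrajectory np Q x D) (hQ : IsRouting Q)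
    (hP : ∀ i j, 0 < np.P i j)
    (hfull : ∀ i j, Tendsto (fun t => (x t).2 i j) atTop (𝓝 (c * (transitProfile np Q π).2 i j)))
    {p : Mat r × Mat r} (hp : MapClusterPt p atTop x) : IsEquilibriumAtLevel np Q π c p := by
  have hlimit : ∀ (L : Mat r × Mat r →L[ℝ] ℝ) {a : ℝ},
      Tendsto (fun t => L (x t)) atTop (𝓝 a) → L p = a := fun L a ha =>
    have hLp : ClusterPt (L p) (map (L ∘ x) atTop) :=
      hp.continuousAt_comp L.continuous.continuousAt
    eq_of_nhds_neBot (hLp.mono ha)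
  exact {
    memT := isCompact_setOf_memT.isClosed.mem_of_mapClusterPt hp (.of_forall h.memT)
    full := fun i j => hlimit (fullCoord i j) (hfull i j)
    empty := fun i j hij => hlimit (emptyCoord i j) (h.tendsto_empty hfull hij)
    idle := fun i hi => hlimit (emptyCoord i i) (h.tendsto_idle hQ hP hfull hi) }

theorem tendsto_nhdsSet_eqSet [Nonempty (Fin r)] (h : IsFluidTrajectory np Q x D)
    (hQ : IsRouting Q) (hP : ∀ i j, 0 < np.P i j) (hQd : ∀ i, 0 < Q i i) :
    Tendsto x atTop (𝓝ˢ (eqSet np Q)) := by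
  obtain ⟨π, hπ, hle, b, hb⟩ := exists_trafficSolution hQ hP hQd
  obtain ⟨c, hc0, hc1, hlevel, harrival⟩ := h.exists_limit_level hQ hP hQd hπ hle hb
  have hfull := fun i => h.tendsto_full hP (tendsto_full_bottleneck hQ hP hQd hπ hlevel harrival i)
  exact isCompact_setOf_memT.tendsto_nhdsSet_of_mapClusterPt (.of_forall h.memT) fun p _ hp =>
    (h.isEquilibriumAtLevel_of_mapClusterPt hQ hP hfull hp).mem_eqSet hπ hc0 fun i =>
      (mul_le_of_le_one_left (hπ.pos i).le hc1).trans (hle i)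

end IsFluidTrajectory
end Limit

/-- Theorem 4 (convergence of the fluid model to the equilibrium set): if
`P_{ij} > 0` for all `i,j` and `Q_{ii} > 0` for all `i`, then every fluid
trajectory converges to the equilibrium set ℰ in the entrywise maximum metric
(the product/sup metric of the ambient space). -/
theorem stmt_15 {r : ℕ} (hr : 1 ≤ r) (np : NetParams r)
    (Q : Mat r) (hQ : IsRouting Q)
    (hP : ∀ i j, 0 < np.P i j) (hQd : ∀ i, 0 < Q i i)
    (e f : ℝ → Mat r) (u : ℝ → Fin r → ℝ)
    (hsol : IsFluidSol np Q e f u) :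
    ∀ ε : ℝ, 0 < ε → ∃ T : ℝ, 0 < T ∧ ∀ t, T ≤ t →
      Metric.infDist (e t, f t) (eqSet np Q) < ε := by
  intro ε hε
  have : Nonempty (Fin r) := ⟨⟨0, hr⟩⟩
  have hnear : {p | Metric.infDist p (eqSet np Q) < ε} ∈ 𝓝ˢ (eqSet np Q) :=
    (isOpen_lt (Metric.continuous_infDist_pt _) continuous_const).mem_nhdsSet.2 fun p hp =>
      (Metric.infDist_zero_of_mem hp).trans_lt hε
  have hconv := hsol.isFluidTrajectory.tendsto_nhdsSet_eqSet hQ hP hQd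
  obtain ⟨T, hT⟩ := eventually_atTop.1 (hconv.eventually hnear)
  refine ⟨max T 1, lt_max_of_lt_right one_pos, fun t ht => ?_⟩
  have ht0 : 0 ≤ t := zero_le_one.trans ((le_max_right T 1).trans ht)
  have hdist : Metric.infDist (extendedState e f t) (eqSet np Q) < ε :=
    hT t ((le_max_left T 1).trans ht)
  rwa [extendedState, max_eq_left ht0] at hdist
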